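/- Let K be any field, and let G_23 ⊆ S_8 be the subgroup generated by the permutations Θ = (1,2,3,4,5,6,7,8) and Φ = (1,2,4)(5,6,8); G_23 has order 48 and is isomorphic to GL(2,3). Then the fixed field K(x_1,…,x_8)^{G_23} is K-rational. -/

import Mathlib

noncomputable section

/-- The rational function field `K(x_i : i ∈ I)` over `K`, realized as the fraction field
of the multivariate polynomial ring. -/
abbrev RFF (K : Type) [Field K] (I : Type) := FractionRing (MvPolynomial I K)

/-- The image of the variable `x_i` in the rational function field `K(x_i : i ∈ I)`. -/
noncomputable def Xvar (K : Type) [Field K] (I : Type) (i : I) : RFF K I :=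
  algebraMap (MvPolynomial I K) (RFF K I) (MvPolynomial.X i)

/-- Permutations of the variables as `K`-algebra automorphisms of the polynomial ring. -/
def renameHom (K : Type) [Field K] (I : Type) :
    Equiv.Perm I →* (MvPolynomial I K ≃ₐ[K] MvPolynomial I K) where
  toFun σ := MvPolynomial.renameEquiv K σ
  map_one' := MvPolynomial.renameEquiv_refl K
  map_mul' σ τ := (MvPolynomial.renameEquiv_trans K τ σ).symm

/-- The action of permutations of the variables on `K(x_i : i ∈ I)` by `K`-automorphisms,
determined by `σ(x_i) = x_{σ(i)}`. -/
noncomputable def permHom (K : Type) [Field K] (I : Type) :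
    Equiv.Perm I →* (RFF K I ≃ₐ[K] RFF K I) :=
  (IsFractionRing.fieldEquivOfAlgEquivHom K (RFF K I)).comp (renameHom K I)

/-- The fixed field `K(x_i : i ∈ I)^G` of a group `G` of permutations of the variables. -/
noncomputable def fixedSub (K : Type) [Field K] (I : Type) (G : Subgroup (Equiv.Perm I)) :
    IntermediateField K (RFF K I) :=
  IntermediateField.fixedField (G.map (permHom K I))

/-- An extension `L/K` is `K`-rational if it is purely transcendental over `K`, i.e. generated
by finitely many algebraically independent elements. -/
def IsRatExt (K : Type) [Field K] (L : Type*) [Field L] [Algebra K L] : Prop :=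
  ∃ (n : ℕ) (t : Fin n → L), AlgebraicIndependent K t ∧
    IntermediateField.adjoin K (Set.range t) = ⊤



section General

variable {K : Type} [Field K] {L : Type} [Field L] [Algebra K L]

/-- `L` has finite degree at most `d` over the intermediate field `E`. -/
def Bd (E : IntermediateField K L) (d : ℕ) : Prop :=
  FiniteDimensional E L ∧ Module.finrank E L ≤ d

theorem Bd.step {E : IntermediateField K L} (θ : L) (n d : ℕ) (p : Polynomial E)
    (hm : p.Monic) (hn : p.natDegree ≤ n) (hr : Polynomial.aeval θ p = 0)
    (h : ∀ F : IntermediateField K L, E ≤ F → θ ∈ F → Bd F d) : Bd E (n * d) := by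
  have hint : IsIntegral E θ := ⟨p, hm, by simpa [Polynomial.aeval_def] using hr⟩
  obtain ⟨h1, h2⟩ := h ((IntermediateField.adjoin E {θ}).restrictScalars K)
    (by
      intro y hy
      rw [IntermediateField.mem_restrictScalars]
      exact (IntermediateField.adjoin E {θ}).algebraMap_mem ⟨y, hy⟩)
    (by
      rw [IntermediateField.mem_restrictScalars]
      exact IntermediateField.mem_adjoin_simple_self E θ)
  have h1' : FiniteDimensional (IntermediateField.adjoin E {θ}) L := h1
  have h2' : Module.finrank (IntermediateField.adjoin E {θ}) L ≤ d := h2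
  have h3 : FiniteDimensional E (IntermediateField.adjoin E {θ}) :=
    IntermediateField.adjoin.finiteDimensional hint
  have h4 : Module.finrank E (IntermediateField.adjoin E {θ}) ≤ n := by
    rw [IntermediateField.adjoin.finrank hint]
    exact (Polynomial.natDegree_le_natDegree (minpoly.min E θ hm (by simpa using hr))).trans hn
  refine ⟨Module.Finite.trans (IntermediateField.adjoin E {θ}) L, ?_⟩
  have h5 : Module.Free E (IntermediateField.adjoin E {θ}) := Module.Free.of_divisionRing _ _
  have h6 : Module.Free (IntermediateField.adjoin E {θ}) L := Module.Free.of_divisionRing _ _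
  rw [← Module.finrank_mul_finrank E (IntermediateField.adjoin E {θ}) L]
  exact Nat.mul_le_mul h4 h2'

theorem Bd.step2 {E : IntermediateField K L} (θ : L) (d : ℕ) (c0 c1 : L)
    (h0 : c0 ∈ E) (h1 : c1 ∈ E)
    (hr : θ ^ 2 + c1 * θ + c0 = 0)
    (h : ∀ F : IntermediateField K L, E ≤ F → θ ∈ F → Bd F d) : Bd E (2 * d) := by
  refine Bd.step θ 2 d (Polynomial.X ^ 2 + (Polynomial.C ⟨c1, h1⟩ * Polynomial.X
    + Polynomial.C ⟨c0, h0⟩)) ?_ ?_ ?_ h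
  · monicity!
  · compute_degree!
  · simp [Polynomial.aeval_def, IntermediateField.algebraMap_apply]
    linear_combination hr

theorem Bd.step3 {E : IntermediateField K L} (θ : L) (d : ℕ) (c0 c1 c2 : L)
    (h0 : c0 ∈ E) (h1 : c1 ∈ E) (h2 : c2 ∈ E)
    (hr : θ ^ 3 + c2 * θ ^ 2 + c1 * θ + c0 = 0)
    (h : ∀ F : IntermediateField K L, E ≤ F → θ ∈ F → Bd F d) : Bd E (3 * d) := by
  refine Bd.step θ 3 d (Polynomial.X ^ 3 + (Polynomial.C ⟨c2, h2⟩ * Polynomial.X ^ 2 +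
    Polynomial.C ⟨c1, h1⟩ * Polynomial.X + Polynomial.C ⟨c0, h0⟩)) ?_ ?_ ?_ h
  · monicity!
  · compute_degree!
  · simp [Polynomial.aeval_def, IntermediateField.algebraMap_apply]
    linear_combination hr

theorem Bd.step4 {E : IntermediateField K L} (θ : L) (d : ℕ) (c0 c1 c2 c3 : L)
    (h0 : c0 ∈ E) (h1 : c1 ∈ E) (h2 : c2 ∈ E) (h3 : c3 ∈ E)
    (hr : θ ^ 4 + c3 * θ ^ 3 + c2 * θ ^ 2 + c1 * θ + c0 = 0)
    (h : ∀ F : IntermediateField K L, E ≤ F → θ ∈ F → Bd F d) : Bd E (4 * d) := by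
  refine Bd.step θ 4 d (Polynomial.X ^ 4 + (Polynomial.C ⟨c3, h3⟩ * Polynomial.X ^ 3 +
    Polynomial.C ⟨c2, h2⟩ * Polynomial.X ^ 2 +
    Polynomial.C ⟨c1, h1⟩ * Polynomial.X + Polynomial.C ⟨c0, h0⟩)) ?_ ?_ ?_ h
  · monicity!
  · compute_degree!
  · simp [Polynomial.aeval_def, IntermediateField.algebraMap_apply]
    linear_combination hr

theorem Bd.step6 {E : IntermediateField K L} (θ : L) (d : ℕ) (c0 c2 c4 : L)
    (h0 : c0 ∈ E) (h2 : c2 ∈ E) (h4 : c4 ∈ E)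
    (hr : θ ^ 6 + c4 * θ ^ 4 + c2 * θ ^ 2 + c0 = 0)
    (h : ∀ F : IntermediateField K L, E ≤ F → θ ∈ F → Bd F d) : Bd E (6 * d) := by
  refine Bd.step θ 6 d (Polynomial.X ^ 6 + (Polynomial.C ⟨c4, h4⟩ * Polynomial.X ^ 4 +
    Polynomial.C ⟨c2, h2⟩ * Polynomial.X ^ 2 + Polynomial.C ⟨c0, h0⟩)) ?_ ?_ ?_ h
  · monicity!
  · compute_degree!
  · simp [Polynomial.aeval_def, IntermediateField.algebraMap_apply]
    linear_combination hr

open scoped IntermediateField.algebraAdjoinAdjoin in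
theorem isAlgebraic_adjoin_of (S : Set L)
    (h : Algebra.IsAlgebraic (IntermediateField.adjoin K S) L) :
    Algebra.IsAlgebraic (Algebra.adjoin K S) L :=
  (IsFractionRing.comap_isAlgebraic_iff (A := Algebra.adjoin K S)
    (K := IntermediateField.adjoin K S) (C := L)).2 h

end General

section Action

variable (K : Type) [Field K]

theorem permHom_Xvar (I : Type) (σ : Equiv.Perm I) (i : I) :
    permHom K I σ (Xvar K I i) = Xvar K I (σ i) := by
  simp [permHom, Xvar, renameHom]

theorem permHom_injective (I : Type) : Function.Injective (permHom K I) := by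
  intro σ τ h
  ext i
  have := congrArg (fun f => f (Xvar K I i)) h
  simp only [permHom_Xvar] at this
  exact MvPolynomial.X_injective (IsFractionRing.injective (MvPolynomial I K) (RFF K I) this)

theorem adjoin_Xvar (I : Type) (F : IntermediateField K (RFF K I)) (h : ∀ i, Xvar K I i ∈ F) :
    F = ⊤ := by
  rw [eq_top_iff]
  rintro z -
  have hp : ∀ p : MvPolynomial I K, algebraMap _ (RFF K I) p ∈ F := by
    intro p
    induction p using MvPolynomial.induction_on with
    | C a => exact F.algebraMap_mem a
    | add p q hp hq => rw [map_add]; exact add_mem hp hq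
    | mul_X p i hp => rw [map_mul]; exact mul_mem hp (h i)
  obtain ⟨a, b, -, rfl⟩ := IsFractionRing.div_surjective (MvPolynomial I K) z
  exact div_mem (hp a) (hp b)

theorem Bd_of_Xvar (I : Type) (F : IntermediateField K (RFF K I)) (h : ∀ i, Xvar K I i ∈ F) :
    Bd F 1 := by
  rw [adjoin_Xvar K I F h]
  have hs : Function.Surjective (algebraMap (⊤ : IntermediateField K (RFF K I)) (RFF K I)) :=
    fun z => ⟨⟨z, IntermediateField.mem_top⟩, rfl⟩
  have hf : FiniteDimensional (⊤ : IntermediateField K (RFF K I)) (RFF K I) :=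
    Module.Finite.of_surjective (Algebra.linearMap _ _) hs
  refine ⟨hf, ?_⟩
  have := LinearMap.finrank_le_finrank_of_surjective
    (f := Algebra.linearMap (⊤ : IntermediateField K (RFF K I)) (RFF K I)) hs
  simp at this ⊢

/-- the rotation -/
abbrev gTheta : Equiv.Perm (Fin 8) := finRotate 8

/-- the element of order three -/
abbrev gPhi : Equiv.Perm (Fin 8) :=
  (Equiv.swap (0 : Fin 8) 1 * Equiv.swap 1 3) * (Equiv.swap (4 : Fin 8) 5 * Equiv.swap 5 7)

/-- 48 elements of the group, as words. -/
def gWord (w : Fin 8 × Fin 3 × Fin 2) : Equiv.Perm (Fin 8) :=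
  gTheta ^ (w.1 : ℕ) * gPhi ^ (w.2.1 : ℕ) * (gTheta ^ 2 * gPhi * gTheta) ^ (w.2.2 : ℕ)

theorem gWord_injective : Function.Injective gWord := by
  decide +kernel

theorem card_group : 48 ≤ Nat.card (Subgroup.closure {gTheta, gPhi}) := by
  have hm : ∀ w, gWord w ∈ Subgroup.closure {gTheta, gPhi} := by
    intro w
    have h1 : gTheta ∈ Subgroup.closure {gTheta, gPhi} := Subgroup.subset_closure (by simp)
    have h2 : gPhi ∈ Subgroup.closure {gTheta, gPhi} := Subgroup.subset_closure (by simp)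
    exact mul_mem (mul_mem (pow_mem h1 _) (pow_mem h2 _))
      (pow_mem (mul_mem (mul_mem (pow_mem h1 _) h2) h1) _)
  have := Nat.card_le_card_of_injective
    (fun w => (⟨gWord w, hm w⟩ : Subgroup.closure {gTheta, gPhi}))
    (fun a b h => gWord_injective (congrArg Subtype.val h))
  simpa using this

theorem assemble (t : Fin 8 → RFF K (Fin 8))
    (hΘ : ∀ i, permHom K (Fin 8) gTheta (t i) = t i)
    (hΦ : ∀ i, permHom K (Fin 8) gPhi (t i) = t i)
    (hB : ∀ F : IntermediateField K (RFF K (Fin 8)), (∀ i, t i ∈ F) → Bd F 48) :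
    IsRatExt K ↥(fixedSub K (Fin 8) (Subgroup.closure {gTheta, gPhi})) := by
  set G := Subgroup.closure {gTheta, gPhi} with hG
  set M := fixedSub K (Fin 8) G with hM
  have htM : ∀ i, t i ∈ M := by
    intro i
    rw [hM, fixedSub, IntermediateField.mem_fixedField_iff]
    rintro _ ⟨g, hg, rfl⟩
    induction hg using Subgroup.closure_induction with
    | mem g hg =>
      rcases hg with rfl | rfl
      · exact hΘ i
      · exact hΦ i
    | one => simp
    | mul a b _ _ ha hb => 
      rw [map_mul, AlgEquiv.mul_apply, hb, ha]
    | inv a _ ha => 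
      rw [map_inv]
      exact (AlgEquiv.symm_apply_eq _).2 ha.symm
  set E := IntermediateField.adjoin K (Set.range t) with hE
  have htE : ∀ i, t i ∈ E := fun i => IntermediateField.subset_adjoin K _ ⟨i, rfl⟩
  obtain ⟨hfin, hle⟩ := hB E htE
  have hEM : E ≤ M := by
    rw [hE, IntermediateField.adjoin_le_iff]
    rintro _ ⟨i, rfl⟩
    exact htM i
  have hcard : 48 ≤ Module.finrank M (RFF K (Fin 8)) := by
    have : Finite (G.map (permHom K (Fin 8))) := by
      have : Finite G := inferInstance
      exact Set.Finite.image _ (Set.toFinite (G : Set (Equiv.Perm (Fin 8))))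
    have := Fintype.ofFinite (G.map (permHom K (Fin 8)))
    have h1 : Module.finrank M (RFF K (Fin 8)) = Fintype.card (G.map (permHom K (Fin 8))) :=
      FixedPoints.finrank_eq_card (G.map (permHom K (Fin 8))) (RFF K (Fin 8))
    rw [h1, ← Nat.card_eq_fintype_card]
    rw [Nat.card_congr (G.equivMapOfInjective _ (permHom_injective K (Fin 8))).symm.toEquiv]
    exact card_group
  have hEq : E = M := IntermediateField.eq_of_le_of_finrank_le' hEM (hle.trans hcard)
  have halg : Algebra.IsAlgebraic (Algebra.adjoin K (Set.range t)) (RFF K (Fin 8)) := by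
    have : Algebra.IsAlgebraic E (RFF K (Fin 8)) := Algebra.IsAlgebraic.of_finite _ _
    exact isAlgebraic_adjoin_of (Set.range t) this
  have htr : Cardinal.mk (Fin 8) ≤ Algebra.trdeg K (RFF K (Fin 8)) := by
    have hb : AlgebraicIndependent K (algebraMap (MvPolynomial (Fin 8) K) (RFF K (Fin 8)) ∘
      MvPolynomial.X) := (MvPolynomial.algebraicIndependent_X (Fin 8) K).map'
        (f := IsScalarTower.toAlgHom K (MvPolynomial (Fin 8) K) (RFF K (Fin 8)))
        (IsFractionRing.injective _ _)
    exact hb.cardinalMk_le_trdeg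
  have hT : IsTranscendenceBasis K t :=
    Algebra.IsAlgebraic.isTranscendenceBasis_of_le_trdeg_of_finite K t htr
  refine ⟨8, fun i => ⟨t i, htM i⟩, ?_, ?_⟩
  · refine AlgebraicIndependent.of_comp M.val ?_
    exact hT.1
  · apply IntermediateField.map_injective M.val
    rw [IntermediateField.adjoin_map]
    have h1 : (M.val '' Set.range fun i => (⟨t i, htM i⟩ : M)) = Set.range t := by
      rw [← Set.range_comp]; rfl
    rw [h1, ← hE, hEq]
    ext z
    simp

end Action

section Nonvanishing

/-- A polymorphic expression in `n` variables. -/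
abbrev PolyExpr (n : ℕ) := ∀ (R : Type) [CommRing R], (Fin n → R) → R

/-- The expression commutes with ring homomorphisms. -/
def Natl {n : ℕ} (F : PolyExpr n) : Prop :=
  ∀ (R S : Type) [CommRing R] [CommRing S] (φ : R →+* S) (x : Fin n → R),
    F S (fun i => φ (x i)) = φ (F R x)

theorem nonvan (K : Type) [Field K] (F : PolyExpr 8) (hF : Natl F) (p : ℕ) [CharP K p]
    {R : Type} [CommRing R] [Algebra (ZMod p) R] (a : Fin 8 → R) (ha : F R a ≠ 0) :
    F (RFF K (Fin 8)) (Xvar K (Fin 8)) ≠ 0 := by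
  intro h0
  let _ : Algebra (ZMod p) K := ZMod.algebra K p
  let φ : MvPolynomial (Fin 8) (ZMod p) →+* RFF K (Fin 8) :=
    (algebraMap (MvPolynomial (Fin 8) K) (RFF K (Fin 8))).comp
      (MvPolynomial.map (ZMod.castHom (dvd_refl p) K))
  have hφ : Function.Injective φ := by
    apply (IsFractionRing.injective (MvPolynomial (Fin 8) K) (RFF K (Fin 8))).comp
    apply MvPolynomial.map_injective
    exact ZMod.castHom_injective K
  have h1 := hF _ _ φ MvPolynomial.X
  have h2 : (fun i => φ (MvPolynomial.X i)) = Xvar K (Fin 8) := by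
    funext i
    simp [φ, Xvar]
  rw [h2, h0] at h1
  have h3 : F _ (MvPolynomial.X : Fin 8 → MvPolynomial (Fin 8) (ZMod p)) = 0 :=
    hφ (by rw [← h1, map_zero])
  have h4 := hF _ _ (MvPolynomial.aeval (R := ZMod p) a).toRingHom MvPolynomial.X
  rw [h3, map_zero] at h4
  apply ha
  rw [← h4]
  congr 1
  funext i
  simp

theorem charP_of_prime_eq_zero (K : Type) [Field K] (p : ℕ) (hp : p.Prime) (h : (p : K) = 0) :
    CharP K p := by
  have h1 : ringChar K ∣ p := ringChar.dvd h
  rcases (Nat.dvd_prime hp).1 h1 with h2 | h2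
  · have := ringChar.charP K
    rw [h2] at this
    exact absurd this (fun _ => CharP.char_ne_one K 1 rfl)
  · exact ringChar.of_eq h2

/-- The field with nine elements. -/
abbrev F9 := QuadraticAlgebra (ZMod 3) 2 0

theorem nonvan4 (K : Type) [Field K] (hK : (2 : K) ≠ 0) (F : PolyExpr 4) (hF : Natl F)
    (hg : Int.gcd (F ℤ ![-5, -2, -1, 0]) (F ℤ ![-4, -2, 3, 0]) ∣ 6 ^ 200)
    (c : Fin 4 → F9) (hc : F F9 c ≠ 0) :
    F (RFF K (Fin 8)) ![Xvar K (Fin 8) 0 - Xvar K (Fin 8) 4, Xvar K (Fin 8) 1 - Xvar K (Fin 8) 5,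
      Xvar K (Fin 8) 2 - Xvar K (Fin 8) 6, Xvar K (Fin 8) 3 - Xvar K (Fin 8) 7] ≠ 0 := by
  let F' : PolyExpr 8 := fun R _ x => F R ![x 0 - x 4, x 1 - x 5, x 2 - x 6, x 3 - x 7]
  have hF' : Natl F' := by
    intro R S _ _ φ x
    simp only [F']
    rw [← hF]
    congr 1
    funext i
    fin_cases i <;> simp
  have key : ∀ (R : Type) [CommRing R] (c : Fin 4 → R),
      F' R ![c 0, c 1, c 2, c 3, 0, 0, 0, 0] = F R c := by
    intro R _ c
    simp only [F']
    congr 1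
    funext i
    fin_cases i <;> simp
  by_cases h3 : (3 : K) = 0
  · have := charP_of_prime_eq_zero K 3 Nat.prime_three (by exact_mod_cast h3)
    exact nonvan K F' hF' 3 ![c 0, c 1, c 2, c 3, 0, 0, 0, 0] (by rw [key]; exact hc)
  · have hch := ringChar.charP K
    let _ : Algebra (ZMod (ringChar K)) K := ZMod.algebra K _
    by_cases hA : F K (fun i => Int.castRingHom K ((![-5, -2, -1, 0] : Fin 4 → ℤ) i)) = 0
    · by_cases hB : F K (fun i => Int.castRingHom K ((![-4, -2, 3, 0] : Fin 4 → ℤ) i)) = 0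
      · exfalso
        rw [hF] at hA hB
        have h6 : ((6 : ℤ) ^ 200 : K) = 0 := by
          obtain ⟨k, hk⟩ := hg
          have h1 := Int.gcd_eq_gcd_ab (F ℤ ![-5, -2, -1, 0]) (F ℤ ![-4, -2, 3, 0])
          have h2 := congrArg (Int.castRingHom K) h1
          rw [map_add, map_mul, map_mul, hA, hB] at h2
          have h3 := congrArg (Nat.cast : ℕ → K) hk
          push_cast at h3
          simp only [eq_intCast, Int.cast_natCast, zero_mul, add_zero] at h2
          rw [h2, zero_mul] at h3
          exact_mod_cast h3
        have h7 : (6 : K) = 0 := by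
          have := pow_eq_zero_iff (n := 200) (by norm_num) |>.1 h6
          exact_mod_cast this
        have h8 : (2 : K) * 3 = 0 := by linear_combination h7
        rcases mul_eq_zero.1 h8 with h | h
        · exact hK h
        · exact h3 h
      · exact nonvan K F' hF' (ringChar K) (R := K) _ ((key K (fun i => Int.castRingHom K ((![-4, -2, 3, 0] : Fin 4 → ℤ) i))).trans_ne hB)
    · exact nonvan K F' hF' (ringChar K) (R := K) _ ((key K (fun i => Int.castRingHom K ((![-5, -2, -1, 0] : Fin 4 → ℤ) i))).trans_ne hA)

end Nonvanishing

section OddAlgebra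

theorem symm_id1 {L : Type} [Field L] (X1 X2 X3 a b c : L) :
    (a*X1^2+b*X1+c)*(a*X2^2+b*X2+c)*X3*((X3-X1)*(X3-X2))
    + (a*X1^2+b*X1+c)*(a*X3^2+b*X3+c)*X2*((X2-X1)*(X2-X3))
    + (a*X2^2+b*X2+c)*(a*X3^2+b*X3+c)*X1*((X1-X2)*(X1-X3))
    = (fun s1 s2 s3 => s1^3*c^2 + s1^2*s2*b*c + 2*s1^2*s3*a*c + s1^2*s3*b^2 + s1*s2*s3*a*b
      - 4*s1*s2*c^2 - 3*s1*s3^2*a^2 + 3*s1*s3*b*c + s2^2*s3*a^2 - 4*s2^2*b*c - 6*s2*s3*a*c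
      - 3*s2*s3*b^2 - 9*s3^2*a*b + 9*s3*c^2) (X1+X2+X3) (X1*X2+X2*X3+X1*X3) (X1*X2*X3) := by
  ring

theorem symm_id2 {L : Type} [Field L] (X1 X2 X3 a b c : L) :
    (a*X1^2+b*X1+c)^2*X2*X3*(X2-X3)^2 + (a*X2^2+b*X2+c)^2*X1*X3*(X1-X3)^2
    + (a*X3^2+b*X3+c)^2*X1*X2*(X1-X2)^2
    = (fun s1 s2 s3 => s1^2*s2*c^2 - 4*s1^2*s3^2*a^2 + 4*s1^2*s3*b*c + s1*s2^2*s3*a^2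
      + 2*s1*s2*s3*a*c + s1*s2*s3*b^2 - 12*s1*s3^2*a*b + 3*s1*s3*c^2 + 4*s2^2*s3*a*b - 4*s2^2*c^2
      + 3*s2*s3^2*a^2 - 12*s2*s3*b*c - 18*s3^2*a*c - 9*s3^2*b^2)
      (X1+X2+X3) (X1*X2+X2*X3+X1*X3) (X1*X2*X3) := by
  ring

theorem symm_id3 {L : Type} [Field L] (X1 X2 X3 : L) :
    ((X1-X2)*(X1-X3)*(X2-X3))^2
    = (fun s1 s2 s3 => -4*s1^3*s3 + s1^2*s2^2 + 18*s1*s2*s3 - 4*s2^3 - 27*s3^2)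
      (X1+X2+X3) (X1*X2+X2*X3+X1*X3) (X1*X2*X3) := by
  ring

theorem odd_G {L : Type} [Field L] (X1 X2 X3 z1 z2 z3 P e h n : L)
    (h1 : X1 + X2 + X3 = 3) (h2 : X1*X2 + X2*X3 + X1*X3 = e) (h3 : X1*X2*X3 = P^2)
    (k1 : z1 + z2 + z3 = h) (k2 : z1*X1 + z2*X2 + z3*X3 = n + 3*h)
    (k3 : z1*X2*X3 + z2*X1*X3 + z3*X1*X2 = P*(P+h-1))
    (k4 : 2*P*(z1*z2*X3+z1*z3*X2+z2*z3*X1) - P^3 - 2*(z1^2*X2*X3+z2^2*X1*X3+z3^2*X1*X2) + P^2 = 0)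
    (hP : P ≠ 0) (hP1 : P - 1 ≠ 0) :
    e^2*(27*P^4+4*e^3-54*e*P^2+108*P^2-9*e^2)*(h-1)^2
    - 2*(27*P^4+4*e^3-54*e*P^2+108*P^2-9*e^2)*(2*e*(e+3*P)*n+3*e*(e+P^2+4*P)*(h-1)+4*e^2*P-9*P^4
      +18*e*P^2-36*P^2+3*e^2)
    - 3*(2*e*(e+3*P)*n+3*e*(e+P^2+4*P)*(h-1)+4*e^2*P-9*P^4+18*e*P^2-36*P^2+3*e^2)^2
    + (27*P^4+4*e^3-54*e*P^2+108*P^2-9*e^2)*(3*e^2-36*P^2-2*e^3-2*e^2*P+18*e*P^2-9*P^4) = 0 := by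
  have N1 : z1*((X1-X2)*(X1-X3)) = h*X1^2+n*X1+P*(P+h-1) := by
    rw [← k3, ← k1]
    have : n = z1*X1 + z2*X2 + z3*X3 - (X1+X2+X3)*(z1+z2+z3) := by rw [h1, k1, k2]; ring
    rw [this]; ring
  have N2 : z2*((X2-X1)*(X2-X3)) = h*X2^2+n*X2+P*(P+h-1) := by
    rw [← k3, ← k1]
    have : n = z1*X1 + z2*X2 + z3*X3 - (X1+X2+X3)*(z1+z2+z3) := by rw [h1, k1, k2]; ring
    rw [this]; ring
  have N3 : z3*((X3-X1)*(X3-X2)) = h*X3^2+n*X3+P*(P+h-1) := by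
    rw [← k3, ← k1]
    have : n = z1*X1 + z2*X2 + z3*X3 - (X1+X2+X3)*(z1+z2+z3) := by rw [h1, k1, k2]; ring
    rw [this]; ring
  have i1 := symm_id1 X1 X2 X3 h n (P*(P+h-1))
  have i2 := symm_id2 X1 X2 X3 h n (P*(P+h-1))
  have i3 := symm_id3 X1 X2 X3
  rw [h1, h2, h3] at i1 i2 i3
  rw [← N1, ← N2, ← N3] at i1 i2
  simp only at i1 i2 i3
  have hS : -2*P*(z1*((X1-X2)*(X1-X3))*(z2*((X2-X1)*(X2-X3)))*X3*((X3-X1)*(X3-X2))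
    + z1*((X1-X2)*(X1-X3))*(z3*((X3-X1)*(X3-X2)))*X2*((X2-X1)*(X2-X3))
    + z2*((X2-X1)*(X2-X3))*(z3*((X3-X1)*(X3-X2)))*X1*((X1-X2)*(X1-X3)))
    - 2*((z1*((X1-X2)*(X1-X3)))^2*X2*X3*(X2-X3)^2 + (z2*((X2-X1)*(X2-X3)))^2*X1*X3*(X1-X3)^2
    + (z3*((X3-X1)*(X3-X2)))^2*X1*X2*(X1-X2)^2)
    + ((X1-X2)*(X1-X3)*(X2-X3))^2*(P^2-P^3) = 0 := by
    linear_combination ((X1-X2)*(X1-X3)*(X2-X3))^2 * k4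
  rw [i1, i2, i3] at hS
  have : P^2*(P-1) ≠ 0 := mul_ne_zero (pow_ne_zero _ hP) hP1
  refine (mul_eq_zero.1 ?_).resolve_left this
  linear_combination (-2*e^2*(e+3*P)) * hS

theorem odd_key {L : Type} [Field L] (P e h n m q W v1 vv p : L)
    (hP : P ≠ 0) (hm : m ≠ 0) (hq0 : q ≠ 0) (he : e = m*P)
    (hq : q = 27*P^2+(4*m^3-54*m)*P+108-9*m^2)
    (hW : W = 2*m*(m+3)*n+3*m*(m+P+4)*(h-1)+4*m^2*P-9*P^2+18*m*P-36+3*m^2)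
    (hv1 : v1 = W/(m*q)) (hvv : vv = 1/m+3*v1) (hp : p = h-1-3*P*vv)
    (hG : e^2*(27*P^4+4*e^3-54*e*P^2+108*P^2-9*e^2)*(h-1)^2
    - 2*(27*P^4+4*e^3-54*e*P^2+108*P^2-9*e^2)*(2*e*(e+3*P)*n+3*e*(e+P^2+4*P)*(h-1)+4*e^2*P-9*P^4
      +18*e*P^2-36*P^2+3*e^2)
    - 3*(2*e*(e+3*P)*n+3*e*(e+P^2+4*P)*(h-1)+4*e^2*P-9*P^4+18*e*P^2-36*P^2+3*e^2)^2
    + (27*P^4+4*e^3-54*e*P^2+108*P^2-9*e^2)*(3*e^2-36*P^2-2*e^3-2*e^2*P+18*e*P^2-9*P^4) = 0) :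
    P*(6*p*vv-2*m-8*m^2*v1-12*m^3*v1^2+18*m*vv^2-2) = (36-3*m^2)*vv^2-p^2 := by
  have e1 : 27*P^4+4*e^3-54*e*P^2+108*P^2-9*e^2 = P^2*q := by rw [hq, he]; ring
  have e2 : 2*e*(e+3*P)*n+3*e*(e+P^2+4*P)*(h-1)+4*e^2*P-9*P^4
      +18*e*P^2-36*P^2+3*e^2 = P^2*W := by rw [hW, he]; ring
  have e3 : 3*e^2-36*P^2-2*e^3-2*e^2*P+18*e*P^2-9*P^4
      = P^2*(3*m^2-36-2*m^3*P-2*m^2*P+18*m*P-9*P^2) := by rw [he]; ring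
  rw [e1, e2, e3, he] at hG
  have hG' : m^2*q*(h-1)^2-2*q*W-3*W^2+q*(3*m^2-36-2*m^3*P-2*m^2*P+18*m*P-9*P^2) = 0 := by
    refine (mul_eq_zero.1 ?_).resolve_left (pow_ne_zero 4 hP)
    linear_combination hG
  have hWv : W = v1*(m*q) := by rw [hv1]; field_simp
  have hvv' : vv*m = 1+3*v1*m := by rw [hvv]; field_simp
  rw [hWv] at hG'
  have hG'' : m^2*(h-1)^2-2*v1*m*q-3*v1^2*m^2*q+(3*m^2-36-2*m^3*P-2*m^2*P+18*m*P-9*P^2) = 0 := by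
    refine (mul_eq_zero.1 ?_).resolve_left hq0
    linear_combination hG'
  rw [hq] at hG''
  have hp' : h - 1 = p + 3*P*vv := by rw [hp]; ring
  rw [hp'] at hG''
  have : m^2 ≠ 0 := pow_ne_zero _ hm
  refine mul_left_cancel₀ this ?_
  have hz : m*vv = 1 + 3*v1*m := by rw [← hvv']; ring
  -- express everything in terms of `v1`
  have hvv2 : vv = (1+3*v1*m)/m := by rw [← hz]; field_simp
  rw [hvv2] at hG'' ⊢
  field_simp at hG'' ⊢
  linear_combination hG''

theorem vand {K L : Type} [Field K] [Field L] [Algebra K L] (F : IntermediateField K L)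
    (Y0 Y1 Y2 Y3 s0 s1 s2 s3 : L) (h0 : Y0 ∈ F) (h1 : Y1 ∈ F) (h2 : Y2 ∈ F) (h3 : Y3 ∈ F)
    (d1 : Y0 - Y1 ≠ 0) (d2 : Y0 - Y2 ≠ 0) (d3 : Y0 - Y3 ≠ 0)
    (t0 : s0 + s1 + s2 + s3 ∈ F) (t1 : s0*Y0 + s1*Y1 + s2*Y2 + s3*Y3 ∈ F)
    (t2 : s0*Y0^2 + s1*Y1^2 + s2*Y2^2 + s3*Y3^2 ∈ F)
    (t3 : s0*Y0^3 + s1*Y1^3 + s2*Y2^3 + s3*Y3^3 ∈ F) : s0 ∈ F := by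
  have : s0 = ((s0*Y0^3 + s1*Y1^3 + s2*Y2^3 + s3*Y3^3)
    - (Y1+Y2+Y3)*(s0*Y0^2 + s1*Y1^2 + s2*Y2^2 + s3*Y3^2)
    + (Y1*Y2+Y1*Y3+Y2*Y3)*(s0*Y0 + s1*Y1 + s2*Y2 + s3*Y3)
    - Y1*Y2*Y3*(s0 + s1 + s2 + s3))/((Y0-Y1)*(Y0-Y2)*(Y0-Y3)) := by
    rw [eq_div_iff (mul_ne_zero (mul_ne_zero d1 d2) d3)]
    ring
  rw [this]
  generalize s0*Y0^3 + s1*Y1^3 + s2*Y2^3 + s3*Y3^3 = a3 at *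
  generalize s0*Y0^2 + s1*Y1^2 + s2*Y2^2 + s3*Y3^2 = a2 at *
  generalize s0*Y0 + s1*Y1 + s2*Y2 + s3*Y3 = a1 at *
  generalize s0 + s1 + s2 + s3 = a0 at *
  apply_rules [add_mem, sub_mem, mul_mem, div_mem]

end OddAlgebra
set_option linter.unusedSimpArgs false

section OddDefs

variable {R : Type} [CommRing R] (y : Fin 4 → R)

def pQ : R := y 0 ^ 2 + y 1 ^ 2 + y 2 ^ 2 + y 3 ^ 2
def pD1 : R := y 0 ^ 2 + y 2 ^ 2 - y 1 ^ 2 - y 3 ^ 2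
def pD2 : R := y 1 ^ 2 + y 2 ^ 2 - y 3 ^ 2 - y 0 ^ 2
def pD3 : R := y 3 ^ 2 + y 2 ^ 2 - y 0 ^ 2 - y 1 ^ 2
def pv1 : R := pD1 y + 2*(y 0 * y 1 + y 2 * y 3) + 2*(y 0 * y 3 - y 1 * y 2)
def pv2 : R := pD2 y + 2*(y 1 * y 3 + y 2 * y 0) + 2*(y 1 * y 0 - y 3 * y 2)
def pv3 : R := pD3 y + 2*(y 3 * y 0 + y 2 * y 1) + 2*(y 3 * y 1 - y 0 * y 2)
def pP : R := pv1 y * pv2 y * pv3 y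
def pe : R := pv1 y^2*pv2 y^2 + pv2 y^2*pv3 y^2 + pv1 y^2*pv3 y^2
def ph : R := pD1 y * pv1 y + pD2 y * pv2 y + pD3 y * pv3 y
def pn : R := pD1 y * pv1 y^3 + pD2 y * pv2 y^3 + pD3 y * pv3 y^3 - 3*pQ y^2*ph y
def pH : R := ph y - pQ y^2
def pqq : R := 27*pP y^4+4*pe y^3-54*pe y*pP y^2*pQ y^2+108*pP y^2*pQ y^6-9*pe y^2*pQ y^4
def pW : R := 2*pe y*(pe y+3*pP y*pQ y)*pn y+3*pe y*(pe y*pQ y^2+pP y^2+4*pP y*pQ y^3)*pH y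
  +4*pe y^2*pP y*pQ y-9*pP y^4+18*pe y*pP y^2*pQ y^2-36*pP y^2*pQ y^6+3*pe y^2*pQ y^4
def pden : R := 6*(pH y*pe y*pqq y*pP y^2-3*pP y^4*(pqq y+3*pW y))*(pqq y+3*pW y)
  -2*pe y^3*pqq y^2-8*pe y^3*pqq y*pW y-12*pe y^3*pW y^2
  +18*pe y*pP y^2*(pqq y+3*pW y)^2*pQ y^2-2*pe y^2*pP y*pQ y*pqq y^2
def pn1 : R := y 0 * y 2 * (y 3^2 - y 1^2) + y 1 * y 3 * (y 0^2 - y 2^2)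
def pn2 : R := y 1 * y 2 * (y 0^2 - y 3^2) + y 3 * y 0 * (y 1^2 - y 2^2)
def pn3 : R := y 3 * y 2 * (y 1^2 - y 0^2) + y 0 * y 1 * (y 3^2 - y 2^2)

end OddDefs

section OddMap

variable {R S : Type} [CommRing R] [CommRing S] (φ : R →+* S) (y : Fin 4 → R)

theorem map_pQ : φ (pQ y) = pQ (fun i => φ (y i)) := by
  simp only [pQ, map_add, map_sub, map_mul, map_pow, map_ofNat]
theorem map_pD1 : φ (pD1 y) = pD1 (fun i => φ (y i)) := by
  simp only [pD1, map_add, map_sub, map_mul, map_pow, map_ofNat, map_pQ]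
theorem map_pD2 : φ (pD2 y) = pD2 (fun i => φ (y i)) := by
  simp only [pD2, map_add, map_sub, map_mul, map_pow, map_ofNat, map_pQ, map_pD1]
theorem map_pD3 : φ (pD3 y) = pD3 (fun i => φ (y i)) := by
  simp only [pD3, map_add, map_sub, map_mul, map_pow, map_ofNat, map_pQ, map_pD1, map_pD2]
theorem map_pv1 : φ (pv1 y) = pv1 (fun i => φ (y i)) := by
  simp only [pv1, map_add, map_sub, map_mul, map_pow, map_ofNat, map_pQ, map_pD1, map_pD2, map_pD3]
theorem map_pv2 : φ (pv2 y) = pv2 (fun i => φ (y i)) := by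
  simp only [pv2, map_add, map_sub, map_mul, map_pow, map_ofNat, map_pQ, map_pD1, map_pD2, map_pD3, map_pv1]
theorem map_pv3 : φ (pv3 y) = pv3 (fun i => φ (y i)) := by
  simp only [pv3, map_add, map_sub, map_mul, map_pow, map_ofNat, map_pQ, map_pD1, map_pD2, map_pD3, map_pv1, map_pv2]
theorem map_pP : φ (pP y) = pP (fun i => φ (y i)) := by
  simp only [pP, map_add, map_sub, map_mul, map_pow, map_ofNat, map_pQ, map_pD1, map_pD2, map_pD3, map_pv1, map_pv2, map_pv3]
theorem map_pe : φ (pe y) = pe (fun i => φ (y i)) := by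
  simp only [pe, map_add, map_sub, map_mul, map_pow, map_ofNat, map_pQ, map_pD1, map_pD2, map_pD3, map_pv1, map_pv2, map_pv3, map_pP]
theorem map_ph : φ (ph y) = ph (fun i => φ (y i)) := by
  simp only [ph, map_add, map_sub, map_mul, map_pow, map_ofNat, map_pQ, map_pD1, map_pD2, map_pD3, map_pv1, map_pv2, map_pv3, map_pP, map_pe]
theorem map_pn : φ (pn y) = pn (fun i => φ (y i)) := by
  simp only [pn, map_add, map_sub, map_mul, map_pow, map_ofNat, map_pQ, map_pD1, map_pD2, map_pD3, map_pv1, map_pv2, map_pv3, map_pP, map_pe, map_ph]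
theorem map_pH : φ (pH y) = pH (fun i => φ (y i)) := by
  simp only [pH, map_add, map_sub, map_mul, map_pow, map_ofNat, map_pQ, map_pD1, map_pD2, map_pD3, map_pv1, map_pv2, map_pv3, map_pP, map_pe, map_ph, map_pn]
theorem map_pqq : φ (pqq y) = pqq (fun i => φ (y i)) := by
  simp only [pqq, map_add, map_sub, map_mul, map_pow, map_ofNat, map_pQ, map_pD1, map_pD2, map_pD3, map_pv1, map_pv2, map_pv3, map_pP, map_pe, map_ph, map_pn, map_pH]
theorem map_pW : φ (pW y) = pW (fun i => φ (y i)) := by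
  simp only [pW, map_add, map_sub, map_mul, map_pow, map_ofNat, map_pQ, map_pD1, map_pD2, map_pD3, map_pv1, map_pv2, map_pv3, map_pP, map_pe, map_ph, map_pn, map_pH, map_pqq]
theorem map_pden : φ (pden y) = pden (fun i => φ (y i)) := by
  simp only [pden, map_add, map_sub, map_mul, map_pow, map_ofNat, map_pQ, map_pD1, map_pD2, map_pD3, map_pv1, map_pv2, map_pv3, map_pP, map_pe, map_ph, map_pn, map_pH, map_pqq, map_pW]
theorem map_pn1 : φ (pn1 y) = pn1 (fun i => φ (y i)) := by
  simp only [pn1, map_add, map_sub, map_mul, map_pow, map_ofNat, map_pQ, map_pD1, map_pD2, map_pD3, map_pv1, map_pv2, map_pv3, map_pP, map_pe, map_ph, map_pn, map_pH, map_pqq, map_pW, map_pden]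
theorem map_pn2 : φ (pn2 y) = pn2 (fun i => φ (y i)) := by
  simp only [pn2, map_add, map_sub, map_mul, map_pow, map_ofNat, map_pQ, map_pD1, map_pD2, map_pD3, map_pv1, map_pv2, map_pv3, map_pP, map_pe, map_ph, map_pn, map_pH, map_pqq, map_pW, map_pden, map_pn1]
theorem map_pn3 : φ (pn3 y) = pn3 (fun i => φ (y i)) := by
  simp only [pn3, map_add, map_sub, map_mul, map_pow, map_ofNat, map_pQ, map_pD1, map_pD2, map_pD3, map_pv1, map_pv2, map_pv3, map_pP, map_pe, map_ph, map_pn, map_pH, map_pqq, map_pW, map_pden, map_pn1, map_pn2]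

end OddMap

section OddNonvanishing

/-- The elements `x_i - x_{i+4}`. -/
def oy (K : Type) [Field K] : Fin 4 → RFF K (Fin 8) :=
  ![Xvar K (Fin 8) 0 - Xvar K (Fin 8) 4, Xvar K (Fin 8) 1 - Xvar K (Fin 8) 5,
      Xvar K (Fin 8) 2 - Xvar K (Fin 8) 6, Xvar K (Fin 8) 3 - Xvar K (Fin 8) 7]

def ptA : Fin 4 → F9 := ![0, 0, ⟨0, 1⟩, 1]
def ptB : Fin 4 → F9 := ![0, ⟨0, 1⟩, ⟨0, 1⟩, ⟨0, 1⟩]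

variable (K : Type) [Field K]

theorem nz_Q (hK : (2 : K) ≠ 0) : pQ (oy K) ≠ 0 :=
  nonvan4 K hK (fun _ _ y => pQ y) (by
    intro R S _ _ φ x
    simp only [map_add, map_sub, map_mul, map_pow, map_ofNat, map_pQ, map_pv1, map_pv2,
      map_pv3, map_pP, map_pe, map_pden, map_pn1, map_pn2, map_pn3])
    (by decide +kernel) (![0, 0, 0, ⟨0, 1⟩]) (by decide +kernel)

theorem nz_v1 (hK : (2 : K) ≠ 0) : pv1 (oy K) ≠ 0 :=
  nonvan4 K hK (fun _ _ y => pv1 y) (by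
    intro R S _ _ φ x
    simp only [map_add, map_sub, map_mul, map_pow, map_ofNat, map_pQ, map_pv1, map_pv2,
      map_pv3, map_pP, map_pe, map_pden, map_pn1, map_pn2, map_pn3])
    (by decide +kernel) (ptA) (by decide +kernel)

theorem nz_v2 (hK : (2 : K) ≠ 0) : pv2 (oy K) ≠ 0 :=
  nonvan4 K hK (fun _ _ y => pv2 y) (by
    intro R S _ _ φ x
    simp only [map_add, map_sub, map_mul, map_pow, map_ofNat, map_pQ, map_pv1, map_pv2,
      map_pv3, map_pP, map_pe, map_pden, map_pn1, map_pn2, map_pn3])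
    (by decide +kernel) (ptA) (by decide +kernel)

theorem nz_v3 (hK : (2 : K) ≠ 0) : pv3 (oy K) ≠ 0 :=
  nonvan4 K hK (fun _ _ y => pv3 y) (by
    intro R S _ _ φ x
    simp only [map_add, map_sub, map_mul, map_pow, map_ofNat, map_pQ, map_pv1, map_pv2,
      map_pv3, map_pP, map_pe, map_pden, map_pn1, map_pn2, map_pn3])
    (by decide +kernel) (![0, 0, 0, ⟨0, 1⟩]) (by decide +kernel)

theorem nz_e (hK : (2 : K) ≠ 0) : pe (oy K) ≠ 0 :=
  nonvan4 K hK (fun _ _ y => pe y) (by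
    intro R S _ _ φ x
    simp only [map_add, map_sub, map_mul, map_pow, map_ofNat, map_pQ, map_pv1, map_pv2,
      map_pv3, map_pP, map_pe, map_pden, map_pn1, map_pn2, map_pn3])
    (by decide +kernel) (ptA) (by decide +kernel)

theorem nz_e3P (hK : (2 : K) ≠ 0) : pe (oy K) + 3 * pP (oy K) * pQ (oy K) ≠ 0 :=
  nonvan4 K hK (fun _ _ y => pe y + 3 * pP y * pQ y) (by
    intro R S _ _ φ x
    simp only [map_add, map_sub, map_mul, map_pow, map_ofNat, map_pQ, map_pv1, map_pv2,
      map_pv3, map_pP, map_pe, map_pden, map_pn1, map_pn2, map_pn3])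
    (by decide +kernel) (ptA) (by decide +kernel)

theorem nz_P1 (hK : (2 : K) ≠ 0) : pP (oy K) - pQ (oy K) ^ 3 ≠ 0 :=
  nonvan4 K hK (fun _ _ y => pP y - pQ y ^ 3) (by
    intro R S _ _ φ x
    simp only [map_add, map_sub, map_mul, map_pow, map_ofNat, map_pQ, map_pv1, map_pv2,
      map_pv3, map_pP, map_pe, map_pden, map_pn1, map_pn2, map_pn3])
    (by decide +kernel) (![0, 0, ⟨0, 1⟩, ⟨0, 1⟩]) (by decide +kernel)

theorem nz_X12 (hK : (2 : K) ≠ 0) : pv1 (oy K) ^ 2 - pv2 (oy K) ^ 2 ≠ 0 :=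
  nonvan4 K hK (fun _ _ y => pv1 y ^ 2 - pv2 y ^ 2) (by
    intro R S _ _ φ x
    simp only [map_add, map_sub, map_mul, map_pow, map_ofNat, map_pQ, map_pv1, map_pv2,
      map_pv3, map_pP, map_pe, map_pden, map_pn1, map_pn2, map_pn3])
    (by decide +kernel) (ptA) (by decide +kernel)

theorem nz_X13 (hK : (2 : K) ≠ 0) : pv1 (oy K) ^ 2 - pv3 (oy K) ^ 2 ≠ 0 :=
  nonvan4 K hK (fun _ _ y => pv1 y ^ 2 - pv3 y ^ 2) (by
    intro R S _ _ φ x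
    simp only [map_add, map_sub, map_mul, map_pow, map_ofNat, map_pQ, map_pv1, map_pv2,
      map_pv3, map_pP, map_pe, map_pden, map_pn1, map_pn2, map_pn3])
    (by decide +kernel) (ptA) (by decide +kernel)

theorem nz_X23 (hK : (2 : K) ≠ 0) : pv2 (oy K) ^ 2 - pv3 (oy K) ^ 2 ≠ 0 :=
  nonvan4 K hK (fun _ _ y => pv2 y ^ 2 - pv3 y ^ 2) (by
    intro R S _ _ φ x
    simp only [map_add, map_sub, map_mul, map_pow, map_ofNat, map_pQ, map_pv1, map_pv2,
      map_pv3, map_pP, map_pe, map_pden, map_pn1, map_pn2, map_pn3])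
    (by decide +kernel) (ptA) (by decide +kernel)

theorem nz_den (hK : (2 : K) ≠ 0) : pden (oy K) ≠ 0 :=
  nonvan4 K hK (fun _ _ y => pden y) (by
    intro R S _ _ φ x
    simp only [map_add, map_sub, map_mul, map_pow, map_ofNat, map_pQ, map_pv1, map_pv2,
      map_pv3, map_pP, map_pe, map_pden, map_pn1, map_pn2, map_pn3])
    (by decide +kernel) (ptA) (by decide +kernel)

theorem nz_n1 (hK : (2 : K) ≠ 0) : pn1 (oy K) ≠ 0 :=
  nonvan4 K hK (fun _ _ y => pn1 y) (by
    intro R S _ _ φ x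
    simp only [map_add, map_sub, map_mul, map_pow, map_ofNat, map_pQ, map_pv1, map_pv2,
      map_pv3, map_pP, map_pe, map_pden, map_pn1, map_pn2, map_pn3])
    (by decide +kernel) (ptB) (by decide +kernel)

theorem nz_n2 (hK : (2 : K) ≠ 0) : pn2 (oy K) ≠ 0 :=
  nonvan4 K hK (fun _ _ y => pn2 y) (by
    intro R S _ _ φ x
    simp only [map_add, map_sub, map_mul, map_pow, map_ofNat, map_pQ, map_pv1, map_pv2,
      map_pv3, map_pP, map_pe, map_pden, map_pn1, map_pn2, map_pn3])
    (by decide +kernel) (ptB) (by decide +kernel)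

theorem nz_n3 (hK : (2 : K) ≠ 0) : pn3 (oy K) ≠ 0 :=
  nonvan4 K hK (fun _ _ y => pn3 y) (by
    intro R S _ _ φ x
    simp only [map_add, map_sub, map_mul, map_pow, map_ofNat, map_pQ, map_pv1, map_pv2,
      map_pv3, map_pP, map_pe, map_pden, map_pn1, map_pn2, map_pn3])
    (by decide +kernel) (ptB) (by decide +kernel)

theorem nz_y2 (hK : (2 : K) ≠ 0) : oy K 2 ≠ 0 :=
  nonvan4 K hK (fun _ _ y => y 2) (by
    intro R S _ _ φ x
    simp only [map_add, map_sub, map_mul, map_pow, map_ofNat, map_pQ, map_pv1, map_pv2,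
      map_pv3, map_pP, map_pe, map_pden, map_pn1, map_pn2, map_pn3])
    (by decide +kernel) (ptA) (by decide +kernel)

theorem nz_Y01 (hK : (2 : K) ≠ 0) : oy K 0 ^ 2 - oy K 1 ^ 2 ≠ 0 :=
  nonvan4 K hK (fun _ _ y => y 0 ^ 2 - y 1 ^ 2) (by
    intro R S _ _ φ x
    simp only [map_add, map_sub, map_mul, map_pow, map_ofNat, map_pQ, map_pv1, map_pv2,
      map_pv3, map_pP, map_pe, map_pden, map_pn1, map_pn2, map_pn3])
    (by decide +kernel) (![0, ⟨0, 1⟩, 0, 0]) (by decide +kernel)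

theorem nz_Y02 (hK : (2 : K) ≠ 0) : oy K 0 ^ 2 - oy K 2 ^ 2 ≠ 0 :=
  nonvan4 K hK (fun _ _ y => y 0 ^ 2 - y 2 ^ 2) (by
    intro R S _ _ φ x
    simp only [map_add, map_sub, map_mul, map_pow, map_ofNat, map_pQ, map_pv1, map_pv2,
      map_pv3, map_pP, map_pe, map_pden, map_pn1, map_pn2, map_pn3])
    (by decide +kernel) (ptA) (by decide +kernel)

theorem nz_Y12 (hK : (2 : K) ≠ 0) : oy K 1 ^ 2 - oy K 2 ^ 2 ≠ 0 :=
  nonvan4 K hK (fun _ _ y => y 1 ^ 2 - y 2 ^ 2) (by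
    intro R S _ _ φ x
    simp only [map_add, map_sub, map_mul, map_pow, map_ofNat, map_pQ, map_pv1, map_pv2,
      map_pv3, map_pP, map_pe, map_pden, map_pn1, map_pn2, map_pn3])
    (by decide +kernel) (ptA) (by decide +kernel)

theorem nz_Y03 (hK : (2 : K) ≠ 0) : oy K 0 ^ 2 - oy K 3 ^ 2 ≠ 0 :=
  nonvan4 K hK (fun _ _ y => y 0 ^ 2 - y 3 ^ 2) (by
    intro R S _ _ φ x
    simp only [map_add, map_sub, map_mul, map_pow, map_ofNat, map_pQ, map_pv1, map_pv2,
      map_pv3, map_pP, map_pe, map_pden, map_pn1, map_pn2, map_pn3])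
    (by decide +kernel) (ptA) (by decide +kernel)

theorem nz_Y13 (hK : (2 : K) ≠ 0) : oy K 1 ^ 2 - oy K 3 ^ 2 ≠ 0 :=
  nonvan4 K hK (fun _ _ y => y 1 ^ 2 - y 3 ^ 2) (by
    intro R S _ _ φ x
    simp only [map_add, map_sub, map_mul, map_pow, map_ofNat, map_pQ, map_pv1, map_pv2,
      map_pv3, map_pP, map_pe, map_pden, map_pn1, map_pn2, map_pn3])
    (by decide +kernel) (ptA) (by decide +kernel)

theorem nz_Y23 (hK : (2 : K) ≠ 0) : oy K 2 ^ 2 - oy K 3 ^ 2 ≠ 0 :=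
  nonvan4 K hK (fun _ _ y => y 2 ^ 2 - y 3 ^ 2) (by
    intro R S _ _ φ x
    simp only [map_add, map_sub, map_mul, map_pow, map_ofNat, map_pQ, map_pv1, map_pv2,
      map_pv3, map_pP, map_pe, map_pden, map_pn1, map_pn2, map_pn3])
    (by decide +kernel) (ptA) (by decide +kernel)

end OddNonvanishing

section OddTower

variable {K L : Type} [Field K] [Field L] [Algebra K L]

theorem mem_of_mul_eq (F : IntermediateField K L) {a b c : L} (ha : a ≠ 0) (haF : a ∈ F)
    (hc : c ∈ F) (h : a * b = c) : b ∈ F := by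
  have : b = c / a := by rw [eq_div_iff ha, ← h, mul_comm]
  rw [this]
  exact div_mem hc haF

/-- The last step: from the squares to the `y_i`. -/
theorem odd_T1 (F : IntermediateField K L) (y : Fin 4 → L) (h2 : (2 : L) ≠ 0)
    (hQ : pQ y ∈ F) (hD1 : pD1 y ∈ F) (hD2 : pD2 y ∈ F) (hD3 : pD3 y ∈ F)
    (hv1 : pv1 y ∈ F) (hv2 : pv2 y ∈ F) (hv3 : pv3 y ∈ F)
    (n1 : pn1 y ≠ 0) (n2 : pn2 y ≠ 0) (n3 : pn3 y ≠ 0) (hy2 : y 2 ≠ 0)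
    (Y01 : y 0 ^ 2 - y 1 ^ 2 ≠ 0) (Y13 : y 1 ^ 2 - y 3 ^ 2 ≠ 0) (Y03 : y 0 ^ 2 - y 3 ^ 2 ≠ 0)
    (d : ℕ)
    (hfin : ∀ F' : IntermediateField K L, F ≤ F' → (∀ i, y i ∈ F') → Bd F' d) :
    Bd F (2 * d) := by
  have h4 : (4 : L) ≠ 0 := by
    have : (4 : L) = 2 * 2 := by norm_num
    rw [this]; exact mul_ne_zero h2 h2
  have h8 : (8 : L) ≠ 0 := by
    have : (8 : L) = 2 * 4 := by norm_num
    rw [this]; exact mul_ne_zero h2 h4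
  have m2 : (2 : L) ∈ F := ofNat_mem F 2
  have m4 : (4 : L) ∈ F := ofNat_mem F 4
  have m8 : (8 : L) ∈ F := ofNat_mem F 8
  have Y0 : y 0 ^ 2 ∈ F := mem_of_mul_eq F h4 m4
    (sub_mem (sub_mem (add_mem hQ hD1) hD2) hD3) (by simp only [pQ, pD1, pD2, pD3]; ring)
  have Y1 : y 1 ^ 2 ∈ F := mem_of_mul_eq F h4 m4
    (sub_mem (add_mem (sub_mem hQ hD1) hD2) hD3) (by simp only [pQ, pD1, pD2, pD3]; ring)
  have Y2 : y 2 ^ 2 ∈ F := mem_of_mul_eq F h4 m4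
    (add_mem (add_mem (add_mem hQ hD1) hD2) hD3) (by simp only [pQ, pD1, pD2, pD3]; ring)
  have Y3 : y 3 ^ 2 ∈ F := mem_of_mul_eq F h4 m4
    (add_mem (sub_mem (sub_mem hQ hD1) hD2) hD3) (by simp only [pQ, pD1, pD2, pD3]; ring)
  have mn1 : pn1 y ∈ F := mem_of_mul_eq F h8 m8
    (add_mem (sub_mem (pow_mem (sub_mem hv1 hD1) 2) (pow_mem hQ 2)) (pow_mem hD1 2))
    (by simp only [pn1, pv1, pQ, pD1]; ring)
  have mn2 : pn2 y ∈ F := mem_of_mul_eq F h8 m8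
    (add_mem (sub_mem (pow_mem (sub_mem hv2 hD2) 2) (pow_mem hQ 2)) (pow_mem hD2 2))
    (by simp only [pn2, pv2, pQ, pD2]; ring)
  have mn3 : pn3 y ∈ F := mem_of_mul_eq F h8 m8
    (add_mem (sub_mem (pow_mem (sub_mem hv3 hD3) 2) (pow_mem hQ 2)) (pow_mem hD3 2))
    (by simp only [pn3, pv3, pQ, pD3]; ring)
  have a0 : y 0 * y 2 ∈ F := by
    refine mem_of_mul_eq F (a := 2 * pn1 y * (y 3 ^ 2 - y 1 ^ 2))
      (mul_ne_zero (mul_ne_zero h2 n1) (by rw [← neg_sub]; exact neg_ne_zero.2 Y13))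
      (mul_mem (mul_mem m2 mn1) (sub_mem Y3 Y1))
      (c := pn1 y ^ 2 + (y 3 ^ 2 - y 1 ^ 2) ^ 2 * (y 0 ^ 2) * (y 2 ^ 2)
        - (y 0 ^ 2 - y 2 ^ 2) ^ 2 * (y 1 ^ 2) * (y 3 ^ 2)) ?_ (by simp only [pn1]; ring)
    exact sub_mem (add_mem (pow_mem mn1 2) (mul_mem (mul_mem (pow_mem (sub_mem Y3 Y1) 2) Y0) Y2))
      (mul_mem (mul_mem (pow_mem (sub_mem Y0 Y2) 2) Y1) Y3)
  have a1 : y 1 * y 2 ∈ F := by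
    refine mem_of_mul_eq F (a := 2 * pn2 y * (y 0 ^ 2 - y 3 ^ 2))
      (mul_ne_zero (mul_ne_zero h2 n2) Y03)
      (mul_mem (mul_mem m2 mn2) (sub_mem Y0 Y3))
      (c := pn2 y ^ 2 + (y 0 ^ 2 - y 3 ^ 2) ^ 2 * (y 1 ^ 2) * (y 2 ^ 2)
        - (y 1 ^ 2 - y 2 ^ 2) ^ 2 * (y 0 ^ 2) * (y 3 ^ 2)) ?_ (by simp only [pn2]; ring)
    exact sub_mem (add_mem (pow_mem mn2 2) (mul_mem (mul_mem (pow_mem (sub_mem Y0 Y3) 2) Y1) Y2))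
      (mul_mem (mul_mem (pow_mem (sub_mem Y1 Y2) 2) Y0) Y3)
  have a3 : y 3 * y 2 ∈ F := by
    refine mem_of_mul_eq F (a := 2 * pn3 y * (y 1 ^ 2 - y 0 ^ 2))
      (mul_ne_zero (mul_ne_zero h2 n3) (by rw [← neg_sub]; exact neg_ne_zero.2 Y01))
      (mul_mem (mul_mem m2 mn3) (sub_mem Y1 Y0))
      (c := pn3 y ^ 2 + (y 1 ^ 2 - y 0 ^ 2) ^ 2 * (y 2 ^ 2) * (y 3 ^ 2)
        - (y 3 ^ 2 - y 2 ^ 2) ^ 2 * (y 0 ^ 2) * (y 1 ^ 2)) ?_ (by simp only [pn3]; ring)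
    exact sub_mem (add_mem (pow_mem mn3 2) (mul_mem (mul_mem (pow_mem (sub_mem Y1 Y0) 2) Y2) Y3))
      (mul_mem (mul_mem (pow_mem (sub_mem Y3 Y2) 2) Y0) Y1)
  refine Bd.step2 (y 2) d (-(y 2 ^ 2)) 0 (neg_mem Y2) (zero_mem F) (by ring) ?_
  intro F' hF' hyF
  refine hfin F' hF' ?_
  intro i
  have b0 : y 0 ∈ F' := mem_of_mul_eq F' hy2 hyF (hF' a0) (mul_comm _ _)
  have b1 : y 1 ∈ F' := mem_of_mul_eq F' hy2 hyF (hF' a1) (mul_comm _ _)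
  have b3 : y 3 ∈ F' := mem_of_mul_eq F' hy2 hyF (hF' a3) (mul_comm _ _)
  fin_cases i
  · exact b0
  · exact b1
  · exact hyF
  · exact b3

/-- Middle part of the tower: adjoin the `V_i`. -/
theorem odd_T2 (F : IntermediateField K L) (V1 V2 V3 d1 d2 d3 P e h n : L)
    (hPd : P = V1 * V2 * V3) (s1 : V1 ^ 2 + V2 ^ 2 + V3 ^ 2 = 3)
    (he : V1^2*V2^2 + V2^2*V3^2 + V1^2*V3^2 = e)
    (hh : d1 * V1 + d2 * V2 + d3 * V3 = h)
    (hn : d1 * V1 ^ 3 + d2 * V2 ^ 3 + d3 * V3 ^ 3 = n + 3 * h)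
    (hk : d1 * V2 * V3 + d2 * V1 * V3 + d3 * V1 * V2 = P + h - 1)
    (V10 : V1 ≠ 0) (V20 : V2 ≠ 0) (V30 : V3 ≠ 0)
    (X12 : V1 ^ 2 - V2 ^ 2 ≠ 0) (X13 : V1 ^ 2 - V3 ^ 2 ≠ 0) (X23 : V2 ^ 2 - V3 ^ 2 ≠ 0)
    (mP : P ∈ F) (me : e ∈ F) (mh : h ∈ F) (mn : n ∈ F) (d : ℕ)
    (hfin : ∀ F' : IntermediateField K L, F ≤ F' → V1 ∈ F' → V2 ∈ F' → V3 ∈ F' →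
      d1 ∈ F' → d2 ∈ F' → d3 ∈ F' → Bd F' d) :
    Bd F (6 * (4 * d)) := by
  have X21 : V2 ^ 2 - V1 ^ 2 ≠ 0 := by rw [← neg_sub]; exact neg_ne_zero.2 X12
  have X31 : V3 ^ 2 - V1 ^ 2 ≠ 0 := by rw [← neg_sub]; exact neg_ne_zero.2 X13
  have X32 : V3 ^ 2 - V2 ^ 2 ≠ 0 := by rw [← neg_sub]; exact neg_ne_zero.2 X23
  have hn' : n = d1 * V1 ^ 3 + d2 * V2 ^ 3 + d3 * V3 ^ 3
      - (V1 ^ 2 + V2 ^ 2 + V3 ^ 2) * (d1 * V1 + d2 * V2 + d3 * V3) := by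
    rw [hn, s1, hh]; ring
  refine Bd.step6 V1 (4 * d) (-P ^ 2) e (-3) (by rw [neg_mem_iff]; exact pow_mem mP 2) me
    (neg_mem (ofNat_mem F 3)) (by rw [← s1, ← he, hPd]; ring) ?_
  intro F1 h1 m1
  refine Bd.step4 V2 d (P ^ 2 / V1 ^ 2) 0 (-(3 - V1 ^ 2)) 0
    (div_mem (pow_mem (h1 mP) 2) (pow_mem m1 2)) (zero_mem _)
    (neg_mem (sub_mem (ofNat_mem F1 3) (pow_mem m1 2))) (zero_mem _)
    (by rw [← s1, hPd]; field_simp; ring) ?_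
  intro F2 h2 m2
  have m1 := h2 m1
  have mP := h2 (h1 mP)
  have mh := h2 (h1 mh)
  have mn := h2 (h1 mn)
  have m3 : V3 ∈ F2 := mem_of_mul_eq F2 (mul_ne_zero V10 V20) (mul_mem m1 m2) mP hPd.symm
  have mk : P * (P + h - 1) ∈ F2 := mul_mem mP (sub_mem (add_mem mP mh) (one_mem _))
  have N : ∀ V ∈ F2, h * (V ^ 2) ^ 2 + n * V ^ 2 + P * (P + h - 1) ∈ F2 := fun V hV =>
    add_mem (add_mem (mul_mem mh (pow_mem (pow_mem hV 2) 2)) (mul_mem mn (pow_mem hV 2))) mk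
  refine hfin F2 (h1.trans h2) m1 m2 m3 ?_ ?_ ?_
  · refine mem_of_mul_eq F2 (a := V1 * ((V1 ^ 2 - V2 ^ 2) * (V1 ^ 2 - V3 ^ 2)))
      (mul_ne_zero V10 (mul_ne_zero X12 X13))
      (mul_mem m1 (mul_mem (sub_mem (pow_mem m1 2) (pow_mem m2 2))
        (sub_mem (pow_mem m1 2) (pow_mem m3 2)))) (N V1 m1) ?_
    rw [hn', ← hk, ← hh, hPd]; ring
  · refine mem_of_mul_eq F2 (a := V2 * ((V2 ^ 2 - V1 ^ 2) * (V2 ^ 2 - V3 ^ 2)))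
      (mul_ne_zero V20 (mul_ne_zero X21 X23))
      (mul_mem m2 (mul_mem (sub_mem (pow_mem m2 2) (pow_mem m1 2))
        (sub_mem (pow_mem m2 2) (pow_mem m3 2)))) (N V2 m2) ?_
    rw [hn', ← hk, ← hh, hPd]; ring
  · refine mem_of_mul_eq F2 (a := V3 * ((V3 ^ 2 - V1 ^ 2) * (V3 ^ 2 - V2 ^ 2)))
      (mul_ne_zero V30 (mul_ne_zero X31 X32))
      (mul_mem m3 (mul_mem (sub_mem (pow_mem m3 2) (pow_mem m1 2))
        (sub_mem (pow_mem m3 2) (pow_mem m2 2)))) (N V3 m3) ?_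
    rw [hn', ← hk, ← hh, hPd]; ring

/-- Bottom part of the tower: `P, e, h, n` are rational in the generators. -/
theorem odd_T3 (F : IntermediateField K L) (P e h n m q W v1 vv p : L) (h2 : (2 : L) ≠ 0)
    (hm : m ≠ 0) (hm3 : m + 3 ≠ 0) (hq0 : q ≠ 0) (he : e = m*P)
    (hq : q = 27*P^2+(4*m^3-54*m)*P+108-9*m^2)
    (hW : W = 2*m*(m+3)*n+3*m*(m+P+4)*(h-1)+4*m^2*P-9*P^2+18*m*P-36+3*m^2)
    (hv1 : v1 = W/(m*q)) (hvv : vv = 1/m+3*v1) (hp : p = h-1-3*P*vv)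
    (hden : 6*p*vv-2*m-8*m^2*v1-12*m^3*v1^2+18*m*vv^2-2 ≠ 0)
    (key : P*(6*p*vv-2*m-8*m^2*v1-12*m^3*v1^2+18*m*vv^2-2) = (36-3*m^2)*vv^2-p^2)
    (mm : m ∈ F) (mv : v1 ∈ F) (mp : p ∈ F) : P ∈ F ∧ e ∈ F ∧ h ∈ F ∧ n ∈ F := by
  have c (k : ℕ) [k.AtLeastTwo] : (OfNat.ofNat k : L) ∈ F := ofNat_mem F k
  have mvv : vv ∈ F := by
    rw [hvv]; exact add_mem (div_mem (one_mem _) mm) (mul_mem (c 3) mv)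
  have mP : P ∈ F := by
    rw [mul_comm] at key
    refine mem_of_mul_eq F hden ?_ ?_ key
    · apply_rules [add_mem, sub_mem, mul_mem, pow_mem, c]
    · apply_rules [add_mem, sub_mem, mul_mem, pow_mem, c]
  have mh : h ∈ F := by
    have : h = p + 1 + 3 * P * vv := by rw [hp]; ring
    rw [this]
    exact add_mem (add_mem mp (one_mem _)) (mul_mem (mul_mem (c 3) mP) mvv)
  have mq : q ∈ F := by
    rw [hq]
    apply_rules [add_mem, sub_mem, mul_mem, pow_mem, c]
  refine ⟨mP, he ▸ mul_mem mm mP, mh, ?_⟩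
  refine mem_of_mul_eq F (a := 2*m*(m+3)) (mul_ne_zero (mul_ne_zero h2 hm) hm3)
    (mul_mem (mul_mem (c 2) mm) (add_mem mm (c 3)))
    (c := v1*(m*q)-(3*m*(m+P+4)*(h-1)+4*m^2*P-9*P^2+18*m*P-36+3*m^2)) ?_ ?_
  · apply_rules [add_mem, sub_mem, mul_mem, pow_mem, c, one_mem]
  · rw [hv1, div_mul_cancel₀ _ (mul_ne_zero hm hq0), hW]; ring

end OddTower

section OddFinal

variable {L : Type} [Field L] (y : Fin 4 → L)

def oV1 : L := pv1 y / pQ y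
def oV2 : L := pv2 y / pQ y
def oV3 : L := pv3 y / pQ y
def od1 : L := pD1 y / pQ y
def od2 : L := pD2 y / pQ y
def od3 : L := pD3 y / pQ y
def oP : L := oV1 y * oV2 y * oV3 y
def oe : L := oV1 y ^2 * oV2 y ^2 + oV2 y ^2 * oV3 y ^2 + oV1 y ^2 * oV3 y ^2
def oh : L := od1 y * oV1 y + od2 y * oV2 y + od3 y * oV3 y
def on : L := od1 y * oV1 y ^3 + od2 y * oV2 y ^3 + od3 y * oV3 y ^3 - 3 * oh y
def om : L := oe y / oP y
def oq : L := 27 * oP y ^2+(4 * om y ^3-54 * om y) * oP y+108-9 * om y ^2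
def oW : L := 2 * om y * (om y+3) * on y+3 * om y * (om y+oP y+4) * (oh y-1)+4 * om y ^2 * oP y
  -9 * oP y ^2+18 * om y * oP y-36+3 * om y ^2
def ov : L := oW y / (om y * oq y)
def ovv : L := 1 / om y + 3 * ov y
def op : L := oh y - 1 - 3 * oP y * ovv y

theorem o_s1 (hQ : pQ y ≠ 0) : oV1 y ^ 2 + oV2 y ^ 2 + oV3 y ^ 2 = 3 := by
  have : pv1 y ^ 2 + pv2 y ^ 2 + pv3 y ^ 2 = 3 * pQ y ^ 2 := by
    simp only [pv1, pv2, pv3, pD1, pD2, pD3, pQ]; ring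
  simp only [oV1, oV2, oV3]
  field_simp
  linear_combination this

theorem o_k3 (hQ : pQ y ≠ 0) : od1 y * oV2 y * oV3 y + od2 y * oV1 y * oV3 y
    + od3 y * oV1 y * oV2 y = oP y + oh y - 1 := by
  have : pD1 y * pv2 y * pv3 y + pD2 y * pv1 y * pv3 y + pD3 y * pv1 y * pv2 y
      = pv1 y * pv2 y * pv3 y + pQ y * ph y - pQ y ^ 3 := by
    simp only [ph, pv1, pv2, pv3, pD1, pD2, pD3, pQ]; ring
  simp only [oP, oh, od1, od2, od3, oV1, oV2, oV3]
  simp only [ph] at this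
  field_simp
  linear_combination this

theorem o_k4 (hQ : pQ y ≠ 0) : 2 * (od1 y * od2 y * oV3 y + od1 y * od3 y * oV2 y
    + od2 y * od3 y * oV1 y) - oP y - 2 * (od1 y ^ 2 + od2 y ^ 2 + od3 y ^ 2) + 1 = 0 := by
  have : 2 * (pD1 y * pD2 y * pv3 y + pD1 y * pD3 y * pv2 y + pD2 y * pD3 y * pv1 y)
      - pv1 y * pv2 y * pv3 y - 2 * pQ y * (pD1 y ^ 2 + pD2 y ^ 2 + pD3 y ^ 2) + pQ y ^ 3 = 0 := by
    simp only [pv1, pv2, pv3, pD1, pD2, pD3, pQ]; ring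
  simp only [oP, od1, od2, od3, oV1, oV2, oV3]
  field_simp
  linear_combination this

theorem o_key (hQ : pQ y ≠ 0) (hP : oP y ≠ 0) (hP1 : oP y - 1 ≠ 0) (he : oe y ≠ 0)
    (hq : oq y ≠ 0) :
    oP y * (6 * op y * ovv y - 2 * om y - 8 * om y ^ 2 * ov y - 12 * om y ^ 3 * ov y ^ 2
      + 18 * om y * ovv y ^ 2 - 2) = (36 - 3 * om y ^ 2) * ovv y ^ 2 - op y ^ 2 := by
  have hem : oe y = om y * oP y := by simp only [om]; field_simp
  have hm0 : om y ≠ 0 := by rw [om]; exact div_ne_zero he hP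
  refine odd_key (oP y) (oe y) (oh y) (on y) (om y) (oq y) (oW y) (ov y) (ovv y) (op y)
    hP hm0 hq hem rfl rfl rfl rfl rfl ?_
  refine odd_G (oV1 y ^ 2) (oV2 y ^ 2) (oV3 y ^ 2) (od1 y * oV1 y) (od2 y * oV2 y) (od3 y * oV3 y)
    (oP y) (oe y) (oh y) (on y) (o_s1 y hQ) rfl ?_ rfl ?_ ?_ ?_ hP hP1
  · simp only [oP]; ring
  · simp only [on]; ring
  · have := o_k3 y hQ
    rw [← this]; simp only [oP]; ring
  · have := o_k4 y hQ
    have h' : oP y = (oV1 y * oV2 y * oV3 y) := rfl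
    rw [h'] at this ⊢
    linear_combination (oV1 y * oV2 y * oV3 y) ^ 2 * this

theorem o_disc (hQ : pQ y ≠ 0) : 27 * oP y ^ 4 + 4 * oe y ^ 3 - 54 * oe y * oP y ^ 2
    + 108 * oP y ^ 2 - 9 * oe y ^ 2
    = - ((oV1 y ^ 2 - oV2 y ^ 2) * (oV1 y ^ 2 - oV3 y ^ 2) * (oV2 y ^ 2 - oV3 y ^ 2)) ^ 2 := by
  have i := symm_id3 (oV1 y ^ 2) (oV2 y ^ 2) (oV3 y ^ 2)
  have h3 : oV1 y ^ 2 * oV2 y ^ 2 * oV3 y ^ 2 = oP y ^ 2 := by simp only [oP]; ring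
  have h2 : oV1 y ^ 2 * oV2 y ^ 2 + oV2 y ^ 2 * oV3 y ^ 2 + oV1 y ^ 2 * oV3 y ^ 2 = oe y := rfl
  rw [o_s1 y hQ, h2, h3] at i
  rw [i]; ring

theorem o_q (hP : oP y ≠ 0) : 27 * oP y ^ 4 + 4 * oe y ^ 3 - 54 * oe y * oP y ^ 2
    + 108 * oP y ^ 2 - 9 * oe y ^ 2 = oP y ^ 2 * oq y := by
  have : oe y = om y * oP y := by simp only [om]; field_simp
  rw [this, oq]; ring

theorem o_den_aux (P e H n q2 W2 Z m v vv p : L) (hP : P ≠ 0) (he : e ≠ 0)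
    (hq : q2 ≠ 0) (hZ : Z = q2 + 3 * W2)
    (hm : m = e / P) (hv : v = P * W2 / (e * q2)) (hvv : vv = 1/m + 3*v) (hp : p = H - 3*P*vv) :
    (6*p*vv-2*m-8*m^2*v-12*m^3*v^2+18*m*vv^2-2) * (e^2*P*q2^2)
    = 6*(H*e*q2*P^2-3*P^4*Z)*Z-2*e^3*q2^2-8*e^3*q2*W2-12*e^3*W2^2+18*e*P^2*Z^2-2*e^2*P*q2^2 := by
  have h1 : vv = P * Z / (e * q2) := by
    rw [hvv, hv, hm, hZ]; field_simp
  rw [hp, h1, hv, hm]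
  field_simp

theorem o_den (hQ : pQ y ≠ 0) (hP : oP y ≠ 0) (he : oe y ≠ 0)
    (hq : oq y ≠ 0) (hd : pden y ≠ 0) :
    6 * op y * ovv y - 2 * om y - 8 * om y ^ 2 * ov y - 12 * om y ^ 3 * ov y ^ 2
      + 18 * om y * ovv y ^ 2 - 2 ≠ 0 := by
  have hem : oe y = om y * oP y := by simp only [om]; field_simp
  have hm0 : om y ≠ 0 := by rw [om]; exact div_ne_zero he hP
  have hW2 : oP y ^ 2 * oW y = 2 * oe y * (oe y + 3 * oP y) * on y
      + 3 * oe y * (oe y + oP y ^ 2 + 4 * oP y) * (oh y - 1) + 4 * oe y ^ 2 * oP y - 9 * oP y ^ 4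
      + 18 * oe y * oP y ^ 2 - 36 * oP y ^ 2 + 3 * oe y ^ 2 := by
    rw [hem, oW]; ring
  have key := o_den_aux (oP y) (oe y) (oh y - 1) (on y) (oP y ^ 2 * oq y) (oP y ^ 2 * oW y) _
    (om y) (ov y) (ovv y) (op y) hP he (mul_ne_zero (pow_ne_zero _ hP) hq) rfl rfl
    (by rw [ov, hem]; field_simp) rfl rfl
  rw [hW2, ← o_q y hP] at key
  intro h0
  rw [h0, zero_mul] at key
  apply hd
  have e1 : pP y = oP y * pQ y ^ 3 := by
    simp only [pP, oP, oV1, oV2, oV3]; field_simp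
  have e2 : pe y = oe y * pQ y ^ 4 := by
    simp only [pe, oe, oV1, oV2, oV3]; field_simp
  have e3 : ph y = oh y * pQ y ^ 2 := by
    simp only [ph, oh, oV1, oV2, oV3, od1, od2, od3]; field_simp
  have e4 : pn y = on y * pQ y ^ 4 := by
    simp only [pn, on]
    rw [e3]
    simp only [oV1, oV2, oV3, od1, od2, od3]; field_simp
  have e5 : pqq y = (27 * oP y ^ 4 + 4 * oe y ^ 3 - 54 * oe y * oP y ^ 2
    + 108 * oP y ^ 2 - 9 * oe y ^ 2) * pQ y ^ 12 := by
    rw [pqq, e1, e2]; ring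
  have e6 : pW y = (2 * oe y * (oe y + 3 * oP y) * on y
      + 3 * oe y * (oe y + oP y ^ 2 + 4 * oP y) * (oh y - 1) + 4 * oe y ^ 2 * oP y - 9 * oP y ^ 4
      + 18 * oe y * oP y ^ 2 - 36 * oP y ^ 2 + 3 * oe y ^ 2) * pQ y ^ 12 := by
    rw [pW, pH, e1, e2, e3, e4]; ring
  have e7 : pH y = (oh y - 1) * pQ y ^ 2 := by rw [pH, e3]; ring
  rw [pden, e7, e5, e6, e1, e2]
  generalize 27 * oP y ^ 4 + 4 * oe y ^ 3 - 54 * oe y * oP y ^ 2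
    + 108 * oP y ^ 2 - 9 * oe y ^ 2 = A at *
  generalize 2 * oe y * (oe y + 3 * oP y) * on y
      + 3 * oe y * (oe y + oP y ^ 2 + 4 * oP y) * (oh y - 1) + 4 * oe y ^ 2 * oP y - 9 * oP y ^ 4
      + 18 * oe y * oP y ^ 2 - 36 * oP y ^ 2 + 3 * oe y ^ 2 = B at *
  linear_combination (-pQ y ^ 36) * key

end OddFinal

section OddInv

variable {L : Type} [Field L] (y : Fin 4 → L) (φ : L →+* L)

theorem odd_inv_aux (hQ : φ (pQ y) = pQ y) (hP : φ (oP y) = oP y) (he : φ (oe y) = oe y)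
    (hh : φ (oh y) = oh y) (hn : φ (on y) = on y) :
    φ (om y) = om y ∧ φ (ov y) = ov y ∧ φ (op y) = op y ∧ φ (pQ y) = pQ y := by
  have hm : φ (om y) = om y := by simp only [om, map_div₀, hP, he]
  have hq : φ (oq y) = oq y := by
    simp only [oq, map_add, map_sub, map_mul, map_pow, map_ofNat, hP, hm]
  have hW : φ (oW y) = oW y := by
    simp only [oW, map_add, map_sub, map_mul, map_pow, map_ofNat, map_one, hP, hm, hh, hn]
  have hv : φ (ov y) = ov y := by simp only [ov, map_div₀, map_mul, hW, hm, hq]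
  have hvv : φ (ovv y) = ovv y := by
    simp only [ovv, map_div₀, map_add, map_mul, map_ofNat, map_one, hv, hm]
  refine ⟨hm, hv, ?_, hQ⟩
  simp only [op, map_sub, map_mul, map_ofNat, map_one, hh, hP, hvv]

theorem odd_inv_Theta (h0 : φ (y 0) = y 1) (h1 : φ (y 1) = y 2) (h2 : φ (y 2) = y 3)
    (h3 : φ (y 3) = -y 0) :
    φ (om y) = om y ∧ φ (ov y) = ov y ∧ φ (op y) = op y ∧ φ (pQ y) = pQ y := by
  have hQ : φ (pQ y) = pQ y := by rw [map_pQ]; simp only [pQ, h0, h1, h2, h3]; ring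
  have D1 : φ (od1 y) = -od1 y := by
    rw [od1, map_div₀, hQ, map_pD1, ← neg_div]; congr 1
    simp only [pD1, h0, h1, h2, h3]; ring
  have D2 : φ (od2 y) = od3 y := by
    rw [od2, map_div₀, hQ, map_pD2, od3]; congr 1
    simp only [pD2, pD3, h0, h1, h2, h3]; ring
  have D3 : φ (od3 y) = -od2 y := by
    rw [od3, map_div₀, hQ, map_pD3, od2, ← neg_div]; congr 1
    simp only [pD2, pD3, h0, h1, h2, h3]; ring
  have V1 : φ (oV1 y) = -oV1 y := by
    rw [oV1, map_div₀, hQ, map_pv1, ← neg_div]; congr 1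
    simp only [pv1, pD1, h0, h1, h2, h3]; ring
  have V2 : φ (oV2 y) = oV3 y := by
    rw [oV2, map_div₀, hQ, map_pv2, oV3]; congr 1
    simp only [pv2, pv3, pD2, pD3, h0, h1, h2, h3]; ring
  have V3 : φ (oV3 y) = -oV2 y := by
    rw [oV3, map_div₀, hQ, map_pv3, oV2, ← neg_div]; congr 1
    simp only [pv2, pv3, pD2, pD3, h0, h1, h2, h3]; ring
  have hh : φ (oh y) = oh y := by
    simp only [oh, map_add, map_mul, D1, D2, D3, V1, V2, V3]; ring
  refine odd_inv_aux y φ hQ ?_ ?_ hh ?_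
  · simp only [oP, map_mul, V1, V2, V3]; ring
  · simp only [oe, map_add, map_mul, map_pow, V1, V2, V3]; ring
  · simp only [on, map_add, map_sub, map_mul, map_pow, map_ofNat, hh, D1, D2, D3, V1, V2, V3]; ring

theorem odd_inv_Phi (h0 : φ (y 0) = y 1) (h1 : φ (y 1) = y 3) (h2 : φ (y 2) = y 2)
    (h3 : φ (y 3) = y 0) :
    φ (om y) = om y ∧ φ (ov y) = ov y ∧ φ (op y) = op y ∧ φ (pQ y) = pQ y := by
  have hQ : φ (pQ y) = pQ y := by rw [map_pQ]; simp only [pQ, h0, h1, h2, h3]; ring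
  have D1 : φ (od1 y) = od2 y := by
    rw [od1, map_div₀, hQ, map_pD1, od2]; congr 1
    simp only [pD1, pD2, h0, h1, h2, h3]
  have D2 : φ (od2 y) = od3 y := by
    rw [od2, map_div₀, hQ, map_pD2, od3]; congr 1
    simp only [pD2, pD3, h0, h1, h2, h3]
  have D3 : φ (od3 y) = od1 y := by
    rw [od3, map_div₀, hQ, map_pD3, od1]; congr 1
    simp only [pD1, pD3, h0, h1, h2, h3]
  have V1 : φ (oV1 y) = oV2 y := by
    rw [oV1, map_div₀, hQ, map_pv1, oV2]; congr 1
    simp only [pv1, pv2, pD1, pD2, h0, h1, h2, h3]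
  have V2 : φ (oV2 y) = oV3 y := by
    rw [oV2, map_div₀, hQ, map_pv2, oV3]; congr 1
    simp only [pv2, pv3, pD2, pD3, h0, h1, h2, h3]
  have V3 : φ (oV3 y) = oV1 y := by
    rw [oV3, map_div₀, hQ, map_pv3, oV1]; congr 1
    simp only [pv1, pv3, pD1, pD3, h0, h1, h2, h3]
  have hh : φ (oh y) = oh y := by
    simp only [oh, map_add, map_mul, D1, D2, D3, V1, V2, V3]; ring
  refine odd_inv_aux y φ hQ ?_ ?_ hh ?_
  · simp only [oP, map_mul, V1, V2, V3]; ring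
  · simp only [oe, map_add, map_mul, map_pow, V1, V2, V3]; ring
  · simp only [on, map_add, map_sub, map_mul, map_pow, map_ofNat, hh, D1, D2, D3, V1, V2, V3]; ring

end OddInv

section OddCase

/-- The weighted power sums `∑ s_i Y_i^k`. -/
def wsum {L : Type} [Field L] (s Y : Fin 4 → L) (k : ℕ) : L :=
  s 0 * Y 0 ^ k + s 1 * Y 1 ^ k + s 2 * Y 2 ^ k + s 3 * Y 3 ^ k

theorem wsum_mem {K L : Type} [Field K] [Field L] [Algebra K L] (F : IntermediateField K L)
    (s Y : Fin 4 → L) (hY : ∀ i, Y i ∈ F) (d01 : Y 0 - Y 1 ≠ 0) (d02 : Y 0 - Y 2 ≠ 0)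
    (d03 : Y 0 - Y 3 ≠ 0) (d12 : Y 1 - Y 2 ≠ 0) (d13 : Y 1 - Y 3 ≠ 0) (d23 : Y 2 - Y 3 ≠ 0)
    (t0 : wsum s Y 0 ∈ F) (t1 : wsum s Y 1 ∈ F) (t2 : wsum s Y 2 ∈ F) (t3 : wsum s Y 3 ∈ F)
    (i : Fin 4) : s i ∈ F := by
  have nn : ∀ {a b : L}, a - b ≠ 0 → b - a ≠ 0 := fun {a b} h => by
    rw [← neg_sub]; exact neg_ne_zero.2 h
  simp only [wsum, pow_zero, pow_one, mul_one] at t0 t1 t2 t3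
  fin_cases i
  · exact vand F (Y 0) (Y 1) (Y 2) (Y 3) (s 0) (s 1) (s 2) (s 3) (hY 0) (hY 1) (hY 2) (hY 3)
      d01 d02 d03 t0 t1 t2 t3
  · refine vand F (Y 1) (Y 0) (Y 2) (Y 3) (s 1) (s 0) (s 2) (s 3) (hY 1) (hY 0) (hY 2) (hY 3)
      (nn d01) d12 d13 ?_ ?_ ?_ ?_
    · convert t0 using 1; ring
    · convert t1 using 1; ring
    · convert t2 using 1; ring
    · convert t3 using 1; ring
  · refine vand F (Y 2) (Y 1) (Y 0) (Y 3) (s 2) (s 1) (s 0) (s 3) (hY 2) (hY 1) (hY 0) (hY 3)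
      (nn d12) (nn d02) d23 ?_ ?_ ?_ ?_
    · convert t0 using 1; ring
    · convert t1 using 1; ring
    · convert t2 using 1; ring
    · convert t3 using 1; ring
  · refine vand F (Y 3) (Y 1) (Y 2) (Y 0) (s 3) (s 1) (s 2) (s 0) (hY 3) (hY 1) (hY 2) (hY 0)
      (nn d13) (nn d23) (nn d03) ?_ ?_ ?_ ?_
    · convert t0 using 1; ring
    · convert t1 using 1; ring
    · convert t2 using 1; ring
    · convert t3 using 1; ring

theorem wsum_Theta {L : Type} [Field L] (φ : L →+* L) (s Y : Fin 4 → L)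
    (h0 : φ (s 0) = s 1) (h1 : φ (s 1) = s 2) (h2 : φ (s 2) = s 3) (h3 : φ (s 3) = s 0)
    (k0 : φ (Y 0) = Y 1) (k1 : φ (Y 1) = Y 2) (k2 : φ (Y 2) = Y 3) (k3 : φ (Y 3) = Y 0) (k : ℕ) :
    φ (wsum s Y k) = wsum s Y k := by
  simp only [wsum, map_add, map_mul, map_pow, h0, h1, h2, h3, k0, k1, k2, k3]; ring

theorem wsum_Phi {L : Type} [Field L] (φ : L →+* L) (s Y : Fin 4 → L)
    (h0 : φ (s 0) = s 1) (h1 : φ (s 1) = s 3) (h2 : φ (s 2) = s 2) (h3 : φ (s 3) = s 0)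
    (k0 : φ (Y 0) = Y 1) (k1 : φ (Y 1) = Y 3) (k2 : φ (Y 2) = Y 2) (k3 : φ (Y 3) = Y 0) (k : ℕ) :
    φ (wsum s Y k) = wsum s Y k := by
  simp only [wsum, map_add, map_mul, map_pow, h0, h1, h2, h3, k0, k1, k2, k3]; ring

variable (K : Type) [Field K]

/-- The elements `x_i + x_{i+4}`. -/
def os : Fin 4 → RFF K (Fin 8) :=
  ![Xvar K (Fin 8) 0 + Xvar K (Fin 8) 4, Xvar K (Fin 8) 1 + Xvar K (Fin 8) 5,
      Xvar K (Fin 8) 2 + Xvar K (Fin 8) 6, Xvar K (Fin 8) 3 + Xvar K (Fin 8) 7]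

def oY : Fin 4 → RFF K (Fin 8) := fun i => oy K i ^ 2

/-- The action of `Θ`. -/
def phT : RFF K (Fin 8) →+* RFF K (Fin 8) := (permHom K (Fin 8) gTheta : _ →+* _)

/-- The action of `Φ`. -/
def phP : RFF K (Fin 8) →+* RFF K (Fin 8) := (permHom K (Fin 8) gPhi : _ →+* _)

theorem phT_X (i j : Fin 8) (h : gTheta i = j) : phT K (Xvar K (Fin 8) i) = Xvar K (Fin 8) j := by
  subst h; exact permHom_Xvar K (Fin 8) gTheta i

theorem phP_X (i j : Fin 8) (h : gPhi i = j) : phP K (Xvar K (Fin 8) i) = Xvar K (Fin 8) j := by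
  subst h; exact permHom_Xvar K (Fin 8) gPhi i

theorem phT_x : phT K (Xvar K (Fin 8) 0) = Xvar K (Fin 8) 1 ∧
    phT K (Xvar K (Fin 8) 1) = Xvar K (Fin 8) 2 ∧ phT K (Xvar K (Fin 8) 2) = Xvar K (Fin 8) 3 ∧
    phT K (Xvar K (Fin 8) 3) = Xvar K (Fin 8) 4 ∧ phT K (Xvar K (Fin 8) 4) = Xvar K (Fin 8) 5 ∧
    phT K (Xvar K (Fin 8) 5) = Xvar K (Fin 8) 6 ∧ phT K (Xvar K (Fin 8) 6) = Xvar K (Fin 8) 7 ∧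
    phT K (Xvar K (Fin 8) 7) = Xvar K (Fin 8) 0 :=
  ⟨phT_X K _ _ (by decide), phT_X K _ _ (by decide), phT_X K _ _ (by decide),
    phT_X K _ _ (by decide), phT_X K _ _ (by decide), phT_X K _ _ (by decide),
    phT_X K _ _ (by decide), phT_X K _ _ (by decide)⟩

theorem phP_x : phP K (Xvar K (Fin 8) 0) = Xvar K (Fin 8) 1 ∧
    phP K (Xvar K (Fin 8) 1) = Xvar K (Fin 8) 3 ∧ phP K (Xvar K (Fin 8) 2) = Xvar K (Fin 8) 2 ∧
    phP K (Xvar K (Fin 8) 3) = Xvar K (Fin 8) 0 ∧ phP K (Xvar K (Fin 8) 4) = Xvar K (Fin 8) 5 ∧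
    phP K (Xvar K (Fin 8) 5) = Xvar K (Fin 8) 7 ∧ phP K (Xvar K (Fin 8) 6) = Xvar K (Fin 8) 6 ∧
    phP K (Xvar K (Fin 8) 7) = Xvar K (Fin 8) 4 :=
  ⟨phP_X K _ _ (by decide), phP_X K _ _ (by decide), phP_X K _ _ (by decide),
    phP_X K _ _ (by decide), phP_X K _ _ (by decide), phP_X K _ _ (by decide),
    phP_X K _ _ (by decide), phP_X K _ _ (by decide)⟩

theorem phT_s : phT K (os K 0) = os K 1 ∧ phT K (os K 1) = os K 2 ∧ phT K (os K 2) = os K 3 ∧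
    phT K (os K 3) = os K 0 := by
  obtain ⟨h0, h1, h2, h3, h4, h5, h6, h7⟩ := phT_x K
  simp [os, h0, h1, h2, h3, h4, h5, h6, h7, add_comm]

theorem phP_s : phP K (os K 0) = os K 1 ∧ phP K (os K 1) = os K 3 ∧ phP K (os K 2) = os K 2 ∧
    phP K (os K 3) = os K 0 := by
  obtain ⟨h0, h1, h2, h3, h4, h5, h6, h7⟩ := phP_x K
  simp [os, h0, h1, h2, h3, h4, h5, h6, h7]

theorem phT_y : phT K (oy K 0) = oy K 1 ∧ phT K (oy K 1) = oy K 2 ∧ phT K (oy K 2) = oy K 3 ∧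
    phT K (oy K 3) = -oy K 0 := by
  obtain ⟨h0, h1, h2, h3, h4, h5, h6, h7⟩ := phT_x K
  simp [oy, h0, h1, h2, h3, h4, h5, h6, h7]

theorem phP_y : phP K (oy K 0) = oy K 1 ∧ phP K (oy K 1) = oy K 3 ∧ phP K (oy K 2) = oy K 2 ∧
    phP K (oy K 3) = oy K 0 := by
  obtain ⟨h0, h1, h2, h3, h4, h5, h6, h7⟩ := phP_x K
  simp [oy, h0, h1, h2, h3, h4, h5, h6, h7]

theorem forall_fin8 {p : Fin 8 → Prop} (h0 : p 0) (h1 : p 1) (h2 : p 2) (h3 : p 3) (h4 : p 4)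
    (h5 : p 5) (h6 : p 6) (h7 : p 7) (i : Fin 8) : p i := by
  fin_cases i <;> assumption

/-- The eight generators in characteristic different from two. -/
def oddT : Fin 8 → RFF K (Fin 8) :=
  ![om (oy K), ov (oy K), op (oy K), pQ (oy K), wsum (os K) (oY K) 0, wsum (os K) (oY K) 1,
    wsum (os K) (oY K) 2, wsum (os K) (oY K) 3]

theorem case_odd (hK : (2 : K) ≠ 0) :
    IsRatExt K ↥(fixedSub K (Fin 8) (Subgroup.closure {gTheta, gPhi})) := by
  have h2 : (2 : RFF K (Fin 8)) ≠ 0 := by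
    have := (map_ne_zero (algebraMap K (RFF K (Fin 8)))).2 hK
    rwa [map_ofNat] at this
  refine assemble K (oddT K) ?_ ?_ ?_
  · obtain ⟨s0, s1, s2, s3⟩ := phT_s K
    obtain ⟨y0, y1, y2, y3⟩ := phT_y K
    obtain ⟨a1, a2, a3, a4⟩ := odd_inv_Theta (oy K) (phT K) y0 y1 y2 y3
    have w := wsum_Theta (phT K) (os K) (oY K) s0 s1 s2 s3 (by simp [oY, y0]) (by simp [oY, y1])
      (by simp [oY, y2]) (by simp [oY, y3])
    exact forall_fin8 a1 a2 a3 a4 (w 0) (w 1) (w 2) (w 3)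
  · obtain ⟨s0, s1, s2, s3⟩ := phP_s K
    obtain ⟨y0, y1, y2, y3⟩ := phP_y K
    obtain ⟨a1, a2, a3, a4⟩ := odd_inv_Phi (oy K) (phP K) y0 y1 y2 y3
    have w := wsum_Phi (phP K) (os K) (oY K) s0 s1 s2 s3 (by simp [oY, y0]) (by simp [oY, y1])
      (by simp [oY, y2]) (by simp [oY, y3])
    exact forall_fin8 a1 a2 a3 a4 (w 0) (w 1) (w 2) (w 3)
  · intro F hF
    have mm : om (oy K) ∈ F := hF 0
    have mv : ov (oy K) ∈ F := hF 1
    have mp : op (oy K) ∈ F := hF 2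
    have mQ : pQ (oy K) ∈ F := hF 3
    have w0 : wsum (os K) (oY K) 0 ∈ F := hF 4
    have w1 : wsum (os K) (oY K) 1 ∈ F := hF 5
    have w2 : wsum (os K) (oY K) 2 ∈ F := hF 6
    have w3 : wsum (os K) (oY K) 3 ∈ F := hF 7
    have hQ := nz_Q K hK
    have V1 : oV1 (oy K) ≠ 0 := div_ne_zero (nz_v1 K hK) hQ
    have V2 : oV2 (oy K) ≠ 0 := div_ne_zero (nz_v2 K hK) hQ
    have V3 : oV3 (oy K) ≠ 0 := div_ne_zero (nz_v3 K hK) hQ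
    have hP : oP (oy K) ≠ 0 := mul_ne_zero (mul_ne_zero V1 V2) V3
    have eP : oP (oy K) * pQ (oy K) ^ 3 = pP (oy K) := by
      simp only [pP, oP, oV1, oV2, oV3]; field_simp
    have ee : oe (oy K) * pQ (oy K) ^ 4 = pe (oy K) := by
      simp only [pe, oe, oV1, oV2, oV3]; field_simp
    have hP1 : oP (oy K) - 1 ≠ 0 := by
      intro h
      apply nz_P1 K hK
      rw [← eP]; linear_combination pQ (oy K) ^ 3 * h
    have he : oe (oy K) ≠ 0 := by
      intro h
      apply nz_e K hK
      rw [← ee, h, zero_mul]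
    have hm : om (oy K) ≠ 0 := div_ne_zero he hP
    have hm3 : om (oy K) + 3 ≠ 0 := by
      intro h
      apply nz_e3P K hK
      have : oe (oy K) = om (oy K) * oP (oy K) := by simp only [om]; field_simp
      rw [← ee, ← eP, this]; linear_combination oP (oy K) * pQ (oy K) ^ 4 * h
    have X12 : oV1 (oy K) ^ 2 - oV2 (oy K) ^ 2 ≠ 0 := by
      have := div_ne_zero (nz_X12 K hK) (pow_ne_zero 2 hQ)
      rwa [sub_div, ← div_pow, ← div_pow] at this
    have X13 : oV1 (oy K) ^ 2 - oV3 (oy K) ^ 2 ≠ 0 := by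
      have := div_ne_zero (nz_X13 K hK) (pow_ne_zero 2 hQ)
      rwa [sub_div, ← div_pow, ← div_pow] at this
    have X23 : oV2 (oy K) ^ 2 - oV3 (oy K) ^ 2 ≠ 0 := by
      have := div_ne_zero (nz_X23 K hK) (pow_ne_zero 2 hQ)
      rwa [sub_div, ← div_pow, ← div_pow] at this
    have hq : oq (oy K) ≠ 0 := by
      intro h
      have h1 := o_q (oy K) hP
      rw [o_disc (oy K) hQ, h, mul_zero, neg_eq_zero] at h1
      exact pow_ne_zero 2 (mul_ne_zero (mul_ne_zero X12 X13) X23) h1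
    obtain ⟨mP, me, mh, mn⟩ := odd_T3 F (oP (oy K)) (oe (oy K)) (oh (oy K)) (on (oy K)) (om (oy K))
      (oq (oy K)) (oW (oy K)) (ov (oy K)) (ovv (oy K)) (op (oy K)) h2 hm hm3 hq
      (by simp only [om]; field_simp) rfl rfl rfl rfl rfl
      (o_den (oy K) hQ hP he hq (nz_den K hK)) (o_key (oy K) hQ hP hP1 he hq) mm mv mp
    refine odd_T2 F (oV1 (oy K)) (oV2 (oy K)) (oV3 (oy K)) (od1 (oy K)) (od2 (oy K)) (od3 (oy K))
      (oP (oy K)) (oe (oy K)) (oh (oy K)) (on (oy K)) rfl (o_s1 (oy K) hQ) rfl rfl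
      (by simp only [on]; ring) (o_k3 (oy K) hQ) V1 V2 V3 X12 X13 X23 mP me mh mn 2 ?_
    intro F1 hF1 mV1 mV2 mV3 md1 md2 md3
    have mQ1 := hF1 mQ
    have tr : ∀ a : RFF K (Fin 8), a / pQ (oy K) ∈ F1 → a ∈ F1 := fun a ha => by
      have := mul_mem ha mQ1
      rwa [div_mul_cancel₀ _ hQ] at this
    refine odd_T1 F1 (oy K) h2 mQ1 (tr _ md1) (tr _ md2) (tr _ md3) (tr _ mV1) (tr _ mV2)
      (tr _ mV3) (nz_n1 K hK) (nz_n2 K hK) (nz_n3 K hK) (nz_y2 K hK) (nz_Y01 K hK) (nz_Y13 K hK)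
      (nz_Y03 K hK) 1 ?_
    intro F2 hF2 my
    have hle := hF1.trans hF2
    have ms := wsum_mem F2 (os K) (oY K) (fun i => pow_mem (my i) 2) (nz_Y01 K hK) (nz_Y02 K hK)
      (nz_Y03 K hK) (nz_Y12 K hK) (nz_Y13 K hK) (nz_Y23 K hK) (hle w0) (hle w1) (hle w2) (hle w3)
    have m2 : (2 : RFF K (Fin 8)) ∈ F2 := ofNat_mem F2 2
    have A : ∀ i a b, os K i = a + b → oy K i = a - b → a ∈ F2 ∧ b ∈ F2 := by
      intro i a b ha hb
      constructor
      · exact mem_of_mul_eq F2 h2 m2 (add_mem (ms i) (my i)) (by rw [ha, hb]; ring)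
      · exact mem_of_mul_eq F2 h2 m2 (sub_mem (ms i) (my i)) (by rw [ha, hb]; ring)
    apply Bd_of_Xvar
    exact forall_fin8 (A 0 _ _ rfl rfl).1 (A 1 _ _ rfl rfl).1 (A 2 _ _ rfl rfl).1
      (A 3 _ _ rfl rfl).1 (A 0 _ _ rfl rfl).2 (A 1 _ _ rfl rfl).2 (A 2 _ _ rfl rfl).2
      (A 3 _ _ rfl rfl).2

end OddCase

section TwoAlgebra

variable {L : Type} [Field L] (u : Fin 4 → L)

def tσ : L := u 0 + u 1 + u 2 + u 3
def ta1 : L := u 0 + u 2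
def ta2 : L := u 1 + u 2
def ta3 : L := u 3 + u 2
def ts : L := tσ u ^ 2 + tσ u
def tk : L := ts u / (ts u + 1)
def tC1 : L := ta1 u ^ 2 + ta1 u + tk u * ((tσ u + 1) * ta1 u + ta2 u + tσ u)
def tC2 : L := ta2 u ^ 2 + ta2 u + tk u * ((tσ u + 1) * ta2 u + ta3 u + tσ u)
def tC3 : L := ta3 u ^ 2 + ta3 u + tk u * ((tσ u + 1) * ta3 u + ta1 u + tσ u)
def te2 : L := tC1 u * tC2 u + tC1 u * tC3 u + tC2 u * tC3 u
def te3 : L := tC1 u * tC2 u * tC3 u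
def tT1 : L := tC1 u ^ 2 * tC2 u + tC2 u ^ 2 * tC3 u + tC3 u ^ 2 * tC1 u
def tg : L := (tC1 u + tC2 u) * (tC2 u + tC3 u) * (tC1 u + tC3 u)
def tb : L := tT1 u / tg u
def tτ : L := tσ u + tb u
def tG : L := tg u / tk u ^ 3
def tε : L := te2 u / tk u ^ 2
/-- Artin-Schreier values of the `u_i`. -/
def tY : Fin 4 → L := fun i => u i ^ 2 + u i
def tt : L := tY u 0 * tY u 1 + tY u 0 * tY u 2 + tY u 0 * tY u 3 + tY u 1 * tY u 2
  + tY u 1 * tY u 3 + tY u 2 * tY u 3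

variable [CharP L 2]

theorem char_two_eq (L : Type) [Field L] [CharP L 2] : (2 : L) = 0 := CharP.cast_eq_zero L 2

theorem t_sum : ta1 u + ta2 u + ta3 u = tσ u := by
  simp only [ta1, ta2, ta3, tσ]; grind

theorem t_e1 (h : ts u + 1 ≠ 0) : tC1 u + tC2 u + tC3 u = tk u := by
  have hk : tk u * (ts u + 1) = ts u := by rw [tk]; exact div_mul_cancel₀ _ h
  have hs : ts u = tσ u ^ 2 + tσ u := rfl
  have h1 := t_sum u
  simp only [tC1, tC2, tC3]
  generalize tk u = k at *
  generalize ts u = s at *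
  generalize tσ u = σ at *
  generalize ta1 u = a1 at *
  generalize ta2 u = a2 at *
  generalize ta3 u = a3 at *
  subst h1 hs
  grind

theorem t_rel_aux (C1 C2 C3 k s σ T g b G ε τ : L) (hk : k = s / (s + 1)) (h1 : s + 1 ≠ 0)
    (hs0 : s ≠ 0) (hs : s = σ ^ 2 + σ) (hC : C1 + C2 + C3 = k)
    (hg : g = (C1 + C2) * (C2 + C3) * (C1 + C3)) (hg0 : g ≠ 0)
    (hT : T = C1 ^ 2 * C2 + C2 ^ 2 * C3 + C3 ^ 2 * C1) (hb : b = T / g) (hτ : τ = σ + b)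
    (hG : G = g / k ^ 3) (hε : ε = (C1 * C2 + C1 * C3 + C2 * C3) / k ^ 2) :
    s + 1 = τ ^ 2 + τ + (G + ε + ε ^ 2 + ε ^ 3) / G ^ 2 := by
  have hk0 : k ≠ 0 := by rw [hk]; exact div_ne_zero hs0 h1
  have hb2 : (b ^ 2 + b) * g ^ 2 = k ^ 3 * (C1 * C2 * C3) + (C1 * C2 + C1 * C3 + C2 * C3) ^ 3
      + (C1 * C2 * C3) ^ 2 := by
    have : (b ^ 2 + b) * g ^ 2 = T * (T + g) := by rw [hb]; field_simp
    rw [this, hT, hg, ← hC]; grind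
  have hg3 : C1 * C2 * C3 = g + k * (C1 * C2 + C1 * C3 + C2 * C3) := by
    rw [hg, ← hC]; grind
  have he2 : C1 * C2 + C1 * C3 + C2 * C3 = ε * k ^ 2 := by rw [hε]; field_simp
  have hgG : g = G * k ^ 3 := by rw [hG]; field_simp
  have hG0 : G ≠ 0 := by rw [hG]; exact div_ne_zero hg0 (pow_ne_zero _ hk0)
  rw [hg3, he2, hgG] at hb2
  have hb3 : (b ^ 2 + b + 1) * G ^ 2 = G + ε + ε ^ 2 + ε ^ 3 := by
    have : k ^ 6 ≠ 0 := pow_ne_zero _ hk0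
    refine mul_right_cancel₀ this ?_
    have h2 := char_two_eq L
    linear_combination hb2 + (G * ε * k ^ 6 + G ^ 2 * k ^ 6) * h2
  rw [← hb3, mul_div_cancel_right₀ _ (pow_ne_zero 2 hG0), hτ, hs]
  grind

theorem t_a1 (C1 C2 k σ a1 a2 a3 : L) (h : a1 + a2 + a3 = σ)
    (hC1 : C1 = a1 ^ 2 + a1 + k * ((σ + 1) * a1 + a2 + σ))
    (hC2 : C2 = a2 ^ 2 + a2 + k * ((σ + 1) * a2 + a3 + σ)) :
    a1 ^ 4 + 0 * a1 ^ 3 + ((1 + k * (σ + 1)) ^ 2 + k * (1 + k * σ)) * a1 ^ 2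
      + (k * (1 + k * σ) * (1 + k * (σ + 1)) + k ^ 3) * a1
      + ((C1 + k * σ) ^ 2 + k * (1 + k * σ) * (C1 + k * σ) + k ^ 2 * C2) = 0 := by
  subst h hC1 hC2
  grind

theorem t_a2 (C1 k σ a1 a2 : L) 
    (hC1 : C1 = a1 ^ 2 + a1 + k * ((σ + 1) * a1 + a2 + σ)) :
    k * a2 = C1 - (a1 ^ 2 + a1) - k * ((σ + 1) * a1 + σ) := by
  rw [hC1]; ring

theorem t_u2 (hs : ts u ≠ 0) : u 2 ^ 2 + 1 * u 2 + (tt u + (ta1 u ^ 2 + ta1 u) * (ta2 u ^ 2 + ta2 u)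
    + (ta1 u ^ 2 + ta1 u) * (ta3 u ^ 2 + ta3 u) + (ta2 u ^ 2 + ta2 u) * (ta3 u ^ 2 + ta3 u)) / ts u
    = 0 := by
  have : (u 2 ^ 2 + u 2) * ts u + (tt u + (ta1 u ^ 2 + ta1 u) * (ta2 u ^ 2 + ta2 u)
    + (ta1 u ^ 2 + ta1 u) * (ta3 u ^ 2 + ta3 u) + (ta2 u ^ 2 + ta2 u) * (ta3 u ^ 2 + ta3 u)) = 0 := by
    simp only [tt, tY, ta1, ta2, ta3, ts, tσ]
    generalize u 0 = x
    generalize u 1 = y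
    generalize u 2 = z
    generalize u 3 = w
    grind
  field_simp
  linear_combination this

theorem t_inv_Theta (φ : L →+* L) (h0 : φ (u 0) = u 1) (h1 : φ (u 1) = u 2) (h2 : φ (u 2) = u 3)
    (h3 : φ (u 3) = u 0 + 1) (hs : ts u + 1 ≠ 0) (hg : tg u ≠ 0) :
    φ (tτ u) = tτ u ∧ φ (tG u) = tG u ∧ φ (tε u) = tε u ∧ φ (tt u) = tt u := by
  have hσ : φ (tσ u) = tσ u + 1 := by simp only [tσ, map_add, h0, h1, h2, h3]; ring
  have a1 : φ (ta1 u) = ta1 u + tσ u := by simp only [ta1, tσ, map_add, h0, h2]; grind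
  have a2 : φ (ta2 u) = ta3 u := by simp only [ta2, ta3, map_add, h1, h2]; ring
  have a3 : φ (ta3 u) = ta2 u + tσ u + 1 := by simp only [ta2, ta3, tσ, map_add, h3, h2]; grind
  have s : φ (ts u) = ts u := by simp only [ts, map_add, map_pow, hσ]; grind
  have k : φ (tk u) = tk u := by simp only [tk, map_div₀, map_add, map_one, s]
  have hk : tk u * (ts u + 1) = ts u := by rw [tk]; exact div_mul_cancel₀ _ hs
  rw [show ts u = tσ u ^ 2 + tσ u from rfl] at hk
  have sm := t_sum u
  have c1 : φ (tC1 u) = tC1 u := by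
    simp only [tC1, map_add, map_mul, map_pow, map_one, k, hσ, a1, a2]
    grind
  have c2 : φ (tC2 u) = tC3 u := by
    simp only [tC2, tC3, map_add, map_mul, map_pow, map_one, k, hσ, a3, a2]
    grind
  have c3 : φ (tC3 u) = tC2 u := by
    simp only [tC2, tC3, map_add, map_mul, map_pow, map_one, k, hσ, a3, a1]
    grind
  have e2 : φ (te2 u) = te2 u := by
    simp only [te2, map_add, map_mul, c1, c2, c3]; ring
  have g : φ (tg u) = tg u := by
    simp only [tg, map_add, map_mul, c1, c2, c3]; ring
  have T : φ (tT1 u) = tT1 u + tg u := by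
    simp only [tT1, tg, map_add, map_mul, map_pow, c1, c2, c3]
    grind
  have b : φ (tb u) = tb u + 1 := by
    simp only [tb, map_div₀, T, g]; field_simp
  refine ⟨?_, ?_, ?_, ?_⟩
  · simp only [tτ, map_add, hσ, b]; grind
  · simp only [tG, map_div₀, map_pow, g, k]
  · simp only [tε, map_div₀, map_pow, e2, k]
  · have y0 : φ (tY u 0) = tY u 1 := by simp only [tY, map_add, map_pow, h0]
    have y1 : φ (tY u 1) = tY u 2 := by simp only [tY, map_add, map_pow, h1]
    have y2 : φ (tY u 2) = tY u 3 := by simp only [tY, map_add, map_pow, h2]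
    have y3 : φ (tY u 3) = tY u 0 := by simp only [tY, map_add, map_pow, h3]; grind
    simp only [tt, map_add, map_mul, y0, y1, y2, y3]; ring

theorem t_inv_Phi (φ : L →+* L) (h0 : φ (u 0) = u 1) (h1 : φ (u 1) = u 3) (h2 : φ (u 2) = u 2)
    (h3 : φ (u 3) = u 0) :
    φ (tτ u) = tτ u ∧ φ (tG u) = tG u ∧ φ (tε u) = tε u ∧ φ (tt u) = tt u := by
  have hσ : φ (tσ u) = tσ u := by simp only [tσ, map_add, h0, h1, h2, h3]; ring
  have a1 : φ (ta1 u) = ta2 u := by simp only [ta1, ta2, map_add, h0, h2]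
  have a2 : φ (ta2 u) = ta3 u := by simp only [ta2, ta3, map_add, h1, h2]
  have a3 : φ (ta3 u) = ta1 u := by simp only [ta1, ta3, map_add, h3, h2]
  have s : φ (ts u) = ts u := by simp only [ts, map_add, map_pow, hσ]
  have k : φ (tk u) = tk u := by simp only [tk, map_div₀, map_add, map_one, s]
  have c1 : φ (tC1 u) = tC2 u := by
    simp only [tC1, tC2, map_add, map_mul, map_pow, map_one, k, hσ, a1, a2]
  have c2 : φ (tC2 u) = tC3 u := by
    simp only [tC2, tC3, map_add, map_mul, map_pow, map_one, k, hσ, a3, a2]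
  have c3 : φ (tC3 u) = tC1 u := by
    simp only [tC1, tC3, map_add, map_mul, map_pow, map_one, k, hσ, a3, a1]
  have e2 : φ (te2 u) = te2 u := by
    simp only [te2, map_add, map_mul, c1, c2, c3]; ring
  have g : φ (tg u) = tg u := by
    simp only [tg, map_add, map_mul, c1, c2, c3]; ring
  have T : φ (tT1 u) = tT1 u := by
    simp only [tT1, map_add, map_mul, map_pow, c1, c2, c3]; ring
  have b : φ (tb u) = tb u := by
    simp only [tb, map_div₀, T, g]
  refine ⟨?_, ?_, ?_, ?_⟩
  · simp only [tτ, map_add, hσ, b]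
  · simp only [tG, map_div₀, map_pow, g, k]
  · simp only [tε, map_div₀, map_pow, e2, k]
  · have y0 : φ (tY u 0) = tY u 1 := by simp only [tY, map_add, map_pow, h0]
    have y1 : φ (tY u 1) = tY u 3 := by simp only [tY, map_add, map_pow, h1]
    have y2 : φ (tY u 2) = tY u 2 := by simp only [tY, map_add, map_pow, h2]
    have y3 : φ (tY u 3) = tY u 0 := by simp only [tY, map_add, map_pow, h3]
    simp only [tt, map_add, map_mul, y0, y1, y2, y3]; ring

end TwoAlgebra

section TwoNonvanishing

section Defs

variable {R : Type} [CommRing R] (U : Fin 4 → R) (M : R)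

def hσ : R := U 0 + U 1 + U 2 + U 3
def hS : R := hσ U ^ 2 + hσ U * M
def hT : R := hS U M + M ^ 2
def hC (a b : R) : R := (a ^ 2 + a * M) * hT U M + hS U M * ((hσ U + M) * a + b * M + hσ U * M)
def hC1 : R := hC U M (U 0 + U 2) (U 1 + U 2)
def hC2 : R := hC U M (U 1 + U 2) (U 3 + U 2)
def hC3 : R := hC U M (U 3 + U 2) (U 0 + U 2)
def hG : R := (hC1 U M + hC2 U M) * (hC2 U M + hC3 U M) * (hC1 U M + hC3 U M)
def hY (i j : Fin 4) : R := (U i ^ 2 + U i * M) - (U j ^ 2 + U j * M)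
/-- Product of the four sums `x_i + x_{i+4}`. -/
def hM (x : Fin 8 → R) : R := (x 0 + x 4) * (x 1 + x 5) * (x 2 + x 6) * (x 3 + x 7)
def hU (x : Fin 8 → R) : Fin 4 → R :=
  ![x 0 * ((x 1 + x 5) * (x 2 + x 6) * (x 3 + x 7)), x 1 * ((x 0 + x 4) * (x 2 + x 6) * (x 3 + x 7)),
    x 2 * ((x 0 + x 4) * (x 1 + x 5) * (x 3 + x 7)), x 3 * ((x 0 + x 4) * (x 1 + x 5) * (x 2 + x 6))]

end Defs

section Map

variable {R S : Type} [CommRing R] [CommRing S] (φ : R →+* S)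

theorem map_hM (x : Fin 8 → R) : hM (fun i => φ (x i)) = φ (hM x) := by
  simp only [hM, map_mul, map_add]

theorem map_hU (x : Fin 8 → R) : hU (fun i => φ (x i)) = fun i => φ (hU x i) := by
  funext i
  fin_cases i <;> simp [hU]

theorem map_hS (U : Fin 4 → R) (M : R) : hS (fun i => φ (U i)) (φ M) = φ (hS U M) := by
  simp only [hS, hσ, map_mul, map_add, map_pow]

theorem map_hT (U : Fin 4 → R) (M : R) : hT (fun i => φ (U i)) (φ M) = φ (hT U M) := by
  simp only [hT, map_hS, map_add, map_pow]

theorem map_hC (U : Fin 4 → R) (M a b : R) :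
    hC (fun i => φ (U i)) (φ M) (φ a) (φ b) = φ (hC U M a b) := by
  simp only [hC, map_hS, map_hT, hσ, map_add, map_pow, map_mul]

theorem map_hG (U : Fin 4 → R) (M : R) : hG (fun i => φ (U i)) (φ M) = φ (hG U M) := by
  simp only [hG, hC1, hC2, hC3, ← map_add φ, map_hC, map_mul]
  
theorem map_hY (U : Fin 4 → R) (M : R) (i j : Fin 4) :
    hY (fun i => φ (U i)) (φ M) i j = φ (hY U M i j) := by
  simp only [hY, map_add, map_sub, map_pow, map_mul]

end Map

abbrev F4 := QuadraticAlgebra (ZMod 2) 1 1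
abbrev F16 := QuadraticAlgebra F4 ⟨0, 1⟩ 1

def ptC : Fin 8 → F16 := ![⟨0, 0⟩, ⟨⟨0, 1⟩, 0⟩, ⟨0, 1⟩, ⟨⟨0, 0⟩, ⟨0, 1⟩⟩,
  ⟨1, 0⟩, ⟨⟨1, 1⟩, 0⟩, ⟨1, 1⟩, ⟨⟨1, 0⟩, ⟨0, 1⟩⟩]

variable (K : Type) [Field K] [CharP K 2]

theorem nt_M : hM (Xvar K (Fin 8)) ≠ 0 :=
  nonvan K (fun _ _ x => hM x) (fun _ _ _ _ φ x => map_hM φ x) 2 ptC (by decide +kernel)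

theorem nt_S : hS (hU (Xvar K (Fin 8))) (hM (Xvar K (Fin 8))) ≠ 0 :=
  nonvan K (fun _ _ x => hS (hU x) (hM x)) (fun _ _ _ _ φ x => by
    simp only [map_hU, map_hM, map_hS]) 2 ptC (by decide +kernel)

theorem nt_T : hT (hU (Xvar K (Fin 8))) (hM (Xvar K (Fin 8))) ≠ 0 :=
  nonvan K (fun _ _ x => hT (hU x) (hM x)) (fun _ _ _ _ φ x => by
    simp only [map_hU, map_hM, map_hT]) 2 ptC (by decide +kernel)

theorem nt_G : hG (hU (Xvar K (Fin 8))) (hM (Xvar K (Fin 8))) ≠ 0 :=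
  nonvan K (fun _ _ x => hG (hU x) (hM x)) (fun _ _ _ _ φ x => by
    simp only [map_hU, map_hM, map_hG]) 2 ptC (by decide +kernel)

theorem ptC_Y : ∀ i j : Fin 4, i ≠ j → hY (hU ptC) (hM ptC) i j ≠ 0 := by decide +kernel

theorem nt_Y (i j : Fin 4) (h : i ≠ j) : hY (hU (Xvar K (Fin 8))) (hM (Xvar K (Fin 8))) i j ≠ 0 :=
  nonvan K (fun _ _ x => hY (hU x) (hM x) i j) (fun _ _ _ _ φ x => by
    simp only [map_hU, map_hM, map_hY]) 2 ptC (ptC_Y i j h)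

end TwoNonvanishing

section TwoMem

variable {K L : Type} [Field K] [Field L] [Algebra K L] (F : IntermediateField K L)

theorem two_mem1 (k σ C1 C2 : L) (hk : k ∈ F) (hσ : σ ∈ F) (h1 : C1 ∈ F) (h2 : C2 ∈ F) :
    (1 + k * (σ + 1)) ^ 2 + k * (1 + k * σ) ∈ F ∧
    k * (1 + k * σ) * (1 + k * (σ + 1)) + k ^ 3 ∈ F ∧
    (C1 + k * σ) ^ 2 + k * (1 + k * σ) * (C1 + k * σ) + k ^ 2 * C2 ∈ F := by
  have m1 : (1 : L) ∈ F := one_mem _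
  refine ⟨?_, ?_, ?_⟩ <;> apply_rules [add_mem, mul_mem, pow_mem]

theorem two_mem2 (k σ C1 a : L) (hk : k ∈ F) (hσ : σ ∈ F) (h1 : C1 ∈ F) (ha : a ∈ F) :
    C1 - (a ^ 2 + a) - k * ((σ + 1) * a + σ) ∈ F := by
  have m1 : (1 : L) ∈ F := one_mem _
  apply_rules [add_mem, sub_mem, mul_mem, pow_mem]

theorem two_mem3 (t s a1 a2 a3 : L) (ht : t ∈ F) (hs : s ∈ F) (h1 : a1 ∈ F) (h2 : a2 ∈ F)
    (h3 : a3 ∈ F) : (t + (a1 ^ 2 + a1) * (a2 ^ 2 + a2) + (a1 ^ 2 + a1) * (a3 ^ 2 + a3)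
      + (a2 ^ 2 + a2) * (a3 ^ 2 + a3)) / s ∈ F := by
  apply_rules [add_mem, sub_mem, mul_mem, pow_mem, div_mem]

end TwoMem

section TwoTower

variable {K L : Type} [Field K] [Field L] [Algebra K L] [CharP L 2]

theorem two_tower (F : IntermediateField K L) (u : Fin 4 → L) (hs : ts u ≠ 0) (hs1 : ts u + 1 ≠ 0)
    (hg : tg u ≠ 0) (mτ : tτ u ∈ F) (mG : tG u ∈ F) (mε : tε u ∈ F) (mt : tt u ∈ F)
    (hfin : ∀ F' : IntermediateField K L, F ≤ F' → (∀ i, u i ∈ F') → Bd F' 1) :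
    Bd F 48 := by
  have hk0 : tk u ≠ 0 := div_ne_zero hs hs1
  have e1 := t_e1 u hs1
  have rel := t_rel_aux (tC1 u) (tC2 u) (tC3 u) (tk u) (ts u) (tσ u) (tT1 u) (tg u) (tb u) (tG u)
    (tε u) (tτ u) rfl hs1 hs rfl e1 rfl hg rfl rfl rfl rfl rfl
  have m1 : (1 : L) ∈ F := one_mem _
  have ms1 : ts u + 1 ∈ F := by
    rw [rel]
    exact add_mem (add_mem (pow_mem mτ 2) mτ) (div_mem (add_mem (add_mem (add_mem mG mε)
      (pow_mem mε 2)) (pow_mem mε 3)) (pow_mem mG 2))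
  have ms : ts u ∈ F := by
    have := sub_mem ms1 m1
    rwa [add_sub_cancel_right] at this
  have mk : tk u ∈ F := div_mem ms ms1
  have mg : tg u ∈ F := by
    have h : tg u = tG u * tk u ^ 3 := by rw [tG]; field_simp
    rw [h]; exact mul_mem mG (pow_mem mk 3)
  have me2 : te2 u ∈ F := by
    have h : te2 u = tε u * tk u ^ 2 := by rw [tε]; field_simp
    rw [h]; exact mul_mem mε (pow_mem mk 2)
  have me3 : te3 u ∈ F := by
    have h : te3 u = tk u * te2 u - tg u := by
      rw [← e1]; simp only [te3, te2, tg]; ring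
    rw [h]; exact sub_mem (mul_mem mk me2) mg
  have : Bd F (3 * (2 * (4 * (2 * 1)))) := by
    refine Bd.step3 (tC1 u) _ (-te3 u) (te2 u) (-tk u) (neg_mem me3) me2 (neg_mem mk)
      (by rw [← e1]; simp only [te2, te3]; ring) ?_
    intro F1 h1 mC1
    refine Bd.step2 (tC2 u) _ (te2 u - tC1 u * (tk u - tC1 u)) (-(tk u - tC1 u))
      (sub_mem (h1 me2) (mul_mem mC1 (sub_mem (h1 mk) mC1))) (neg_mem (sub_mem (h1 mk) mC1))
      (by rw [← e1]; simp only [te2]; ring) ?_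
    intro F2 h2 mC2
    have hle := h1.trans h2
    have mC1 := h2 mC1
    have mk := hle mk
    have mC3 : tC3 u ∈ F2 := by
      have h : tC3 u = tk u - tC1 u - tC2 u := by rw [← e1]; ring
      rw [h]; exact sub_mem (sub_mem mk mC1) mC2
    have mb : tb u ∈ F2 := div_mem (add_mem (add_mem (mul_mem (pow_mem mC1 2) mC2)
      (mul_mem (pow_mem mC2 2) mC3)) (mul_mem (pow_mem mC3 2) mC1)) (hle mg)
    have mσ : tσ u ∈ F2 := by
      have := sub_mem (hle mτ) mb
      rwa [tτ, add_sub_cancel_right] at this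
    have m1 := hle m1
    obtain ⟨n1, n2, n3⟩ := two_mem1 F2 _ _ _ _ mk mσ mC1 mC2
    refine Bd.step4 (ta1 u) _ _ _ _ _ n3 n2 n1 (zero_mem _)
      (t_a1 (tC1 u) (tC2 u) (tk u) (tσ u) (ta1 u) (ta2 u) (ta3 u) (t_sum u) rfl rfl) ?_
    intro F3 h3 ma1
    have hle := hle.trans h3
    have mk := h3 mk
    have mσ := h3 mσ
    have mC1 := h3 mC1
    have m1 := h3 m1
    have ma2 : ta2 u ∈ F3 := by
      exact mem_of_mul_eq F3 hk0 mk (two_mem2 F3 _ _ _ _ mk mσ mC1 ma1)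
        (t_a2 (tC1 u) (tk u) (tσ u) (ta1 u) (ta2 u) rfl)
    have ma3 : ta3 u ∈ F3 := by
      have h : ta3 u = tσ u - ta1 u - ta2 u := by rw [← t_sum u]; ring
      rw [h]; exact sub_mem (sub_mem mσ ma1) ma2
    have ms := hle ms
    have mt := hle mt
    refine Bd.step2 (u 2) _ _ _ (two_mem3 F3 _ _ _ _ _ mt ms ma1 ma2 ma3) (one_mem _)
      (t_u2 u hs) ?_
    intro F4 h4 mu
    refine hfin F4 (hle.trans h4) ?_
    intro i
    have b0 : u 0 ∈ F4 := by
      have := sub_mem (h4 ma1) mu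
      rwa [ta1, add_sub_cancel_right] at this
    have b1 : u 1 ∈ F4 := by
      have := sub_mem (h4 ma2) mu
      rwa [ta2, add_sub_cancel_right] at this
    have b3 : u 3 ∈ F4 := by
      have := sub_mem (h4 ma3) mu
      rwa [ta3, add_sub_cancel_right] at this
    fin_cases i
    · exact b0
    · exact b1
    · exact mu
    · exact b3
  exact this

/-- Clearing denominators. -/
theorem two_clear (u : Fin 4 → L) (M : L) (U : Fin 4 → L) (hU : ∀ i, U i = u i * M) :
    hS U M = ts u * M ^ 2 ∧ hT U M = (ts u + 1) * M ^ 2 ∧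
    (ts u + 1 ≠ 0 → hG U M = tg u * (ts u + 1) ^ 3 * M ^ 12) ∧
    ∀ i j, hY U M i j = (tY u i - tY u j) * M ^ 2 := by
  have a1 : hS U M = ts u * M ^ 2 := by simp only [hS, hσ, ts, tσ, hU]; ring
  have a2 : hT U M = (ts u + 1) * M ^ 2 := by rw [hT, a1]; ring
  refine ⟨a1, a2, ?_, ?_⟩
  · intro h
    have hk : tk u * (ts u + 1) = ts u := by rw [tk]; exact div_mul_cancel₀ _ h
    have hC' : ∀ a b : L, hC U M (a * M) (b * M)
        = (a ^ 2 + a + tk u * ((tσ u + 1) * a + b + tσ u)) * (ts u + 1) * M ^ 4 := by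
      intro a b
      have hσ' : hσ U = tσ u * M := by simp only [hσ, tσ, hU]; ring
      rw [hC, a1, a2, hσ']
      linear_combination (-M ^ 4 * ((tσ u + 1) * a + b + tσ u)) * hk
    have c1 : hC1 U M = tC1 u * (ts u + 1) * M ^ 4 := by
      rw [hC1, hU, hU, hU, ← add_mul, ← add_mul, hC']; rfl
    have c2 : hC2 U M = tC2 u * (ts u + 1) * M ^ 4 := by
      rw [hC2, hU, hU, hU, ← add_mul, ← add_mul, hC']; rfl
    have c3 : hC3 U M = tC3 u * (ts u + 1) * M ^ 4 := by
      rw [hC3, hU, hU, hU, ← add_mul, ← add_mul, hC']; rfl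
    rw [hG, c1, c2, c3, tg]; ring
  · intro i j
    simp only [hY, tY, hU]; ring

end TwoTower

section TwoCase

variable (K : Type) [Field K]

/-- The elements `x_i / (x_i + x_{i+4})`. -/
def tu : Fin 4 → RFF K (Fin 8) :=
  ![Xvar K (Fin 8) 0 / os K 0, Xvar K (Fin 8) 1 / os K 1, Xvar K (Fin 8) 2 / os K 2,
    Xvar K (Fin 8) 3 / os K 3]

/-- The eight generators in characteristic two. -/
def twoT : Fin 8 → RFF K (Fin 8) :=
  ![tτ (tu K), tG (tu K), tε (tu K), tt (tu K), wsum (os K) (tY (tu K)) 0,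
    wsum (os K) (tY (tu K)) 1, wsum (os K) (tY (tu K)) 2, wsum (os K) (tY (tu K)) 3]

theorem case_two (hK : (2 : K) = 0) :
    IsRatExt K ↥(fixedSub K (Fin 8) (Subgroup.closure {gTheta, gPhi})) := by
  have : CharP K 2 := charP_of_prime_eq_zero K 2 Nat.prime_two (by exact_mod_cast hK)
  have : CharP (RFF K (Fin 8)) 2 := by
    refine charP_of_prime_eq_zero _ 2 Nat.prime_two ?_
    have := congrArg (algebraMap K (RFF K (Fin 8))) hK
    rw [map_ofNat, map_zero] at this
    exact_mod_cast this
  have zM := nt_M K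
  have hM' : hM (Xvar K (Fin 8)) = os K 0 * os K 1 * os K 2 * os K 3 := rfl
  rw [hM'] at zM
  have s3 : os K 3 ≠ 0 := right_ne_zero_of_mul zM
  have s2 : os K 2 ≠ 0 := right_ne_zero_of_mul (left_ne_zero_of_mul zM)
  have s1 : os K 1 ≠ 0 := right_ne_zero_of_mul (left_ne_zero_of_mul (left_ne_zero_of_mul zM))
  have s0 : os K 0 ≠ 0 := left_ne_zero_of_mul (left_ne_zero_of_mul (left_ne_zero_of_mul zM))
  have zU : ∀ i, hU (Xvar K (Fin 8)) i = tu K i * hM (Xvar K (Fin 8)) := by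
    have f0 : Xvar K (Fin 8) 0 + Xvar K (Fin 8) 4 = os K 0 := rfl
    have f1 : Xvar K (Fin 8) 1 + Xvar K (Fin 8) 5 = os K 1 := rfl
    have f2 : Xvar K (Fin 8) 2 + Xvar K (Fin 8) 6 = os K 2 := rfl
    have f3 : Xvar K (Fin 8) 3 + Xvar K (Fin 8) 7 = os K 3 := rfl
    intro i
    rw [hM']
    fin_cases i
    · simp [hU, tu, f0, f1, f2, f3]; field_simp
    · simp [hU, tu, f0, f1, f2, f3]; field_simp
    · simp [hU, tu, f0, f1, f2, f3]; field_simp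
    · simp [hU, tu, f0, f1, f2, f3]; field_simp
  obtain ⟨c1, c2, c3, c4⟩ := two_clear (tu K) _ _ zU
  have hs : ts (tu K) ≠ 0 := by
    have := nt_S K
    rw [c1] at this; exact left_ne_zero_of_mul this
  have hs1 : ts (tu K) + 1 ≠ 0 := by
    have := nt_T K
    rw [c2] at this; exact left_ne_zero_of_mul this
  have hg : tg (tu K) ≠ 0 := by
    have := nt_G K
    rw [c3 hs1] at this; exact left_ne_zero_of_mul (left_ne_zero_of_mul this)
  have hY : ∀ i j : Fin 4, i ≠ j → tY (tu K) i - tY (tu K) j ≠ 0 := by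
    intro i j hij
    have := nt_Y K i j hij
    rw [c4] at this; exact left_ne_zero_of_mul this
  refine assemble K (twoT K) ?_ ?_ ?_
  · obtain ⟨p0, p1, p2, p3⟩ := phT_s K
    obtain ⟨h0, h1, h2, h3, h4, h5, h6, h7⟩ := phT_x K
    have u0 : phT K (tu K 0) = tu K 1 := by simp [tu, h0, p0]
    have u1 : phT K (tu K 1) = tu K 2 := by simp [tu, h1, p1]
    have u2 : phT K (tu K 2) = tu K 3 := by simp [tu, h2, p2]
    have u3 : phT K (tu K 3) = tu K 0 + 1 := by
      have e : Xvar K (Fin 8) 4 = Xvar K (Fin 8) 0 + os K 0 := by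
        have : os K 0 = Xvar K (Fin 8) 0 + Xvar K (Fin 8) 4 := rfl
        rw [this]
        have h2 := char_two_eq (RFF K (Fin 8))
        linear_combination (-Xvar K (Fin 8) 0) * h2
      simp only [tu, Matrix.cons_val, map_div₀, h3, p3, e]
      field_simp
    obtain ⟨a1, a2, a3, a4⟩ := t_inv_Theta (tu K) (phT K) u0 u1 u2 u3 hs1 hg
    have w := wsum_Theta (phT K) (os K) (tY (tu K)) p0 p1 p2 p3 (by simp [tY, u0])
      (by simp [tY, u1]) (by simp [tY, u2]) (by
        simp only [tY, u3, map_add, map_pow]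
        have h2 := char_two_eq (RFF K (Fin 8))
        linear_combination (tu K 0 + 1) * h2)
    exact forall_fin8 a1 a2 a3 a4 (w 0) (w 1) (w 2) (w 3)
  · obtain ⟨p0, p1, p2, p3⟩ := phP_s K
    obtain ⟨h0, h1, h2, h3, h4, h5, h6, h7⟩ := phP_x K
    have u0 : phP K (tu K 0) = tu K 1 := by simp [tu, h0, p0]
    have u1 : phP K (tu K 1) = tu K 3 := by simp [tu, h1, p1]
    have u2 : phP K (tu K 2) = tu K 2 := by simp [tu, h2, p2]
    have u3 : phP K (tu K 3) = tu K 0 := by simp [tu, h3, p3]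
    obtain ⟨a1, a2, a3, a4⟩ := t_inv_Phi (tu K) (phP K) u0 u1 u2 u3
    have w := wsum_Phi (phP K) (os K) (tY (tu K)) p0 p1 p2 p3 (by simp [tY, u0])
      (by simp [tY, u1]) (by simp [tY, u2]) (by simp [tY, u3])
    exact forall_fin8 a1 a2 a3 a4 (w 0) (w 1) (w 2) (w 3)
  · intro F hF
    refine two_tower F (tu K) hs hs1 hg (hF 0) (hF 1) (hF 2) (hF 3) ?_
    intro F2 hle mu
    have ms := wsum_mem F2 (os K) (tY (tu K)) (fun i => add_mem (pow_mem (mu i) 2) (mu i))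
      (hY 0 1 (by decide)) (hY 0 2 (by decide)) (hY 0 3 (by decide)) (hY 1 2 (by decide))
      (hY 1 3 (by decide)) (hY 2 3 (by decide)) (hle (hF 4)) (hle (hF 5)) (hle (hF 6)) (hle (hF 7))
    have A : ∀ i a b, os K i ≠ 0 → os K i = a + b → tu K i = a / os K i → a ∈ F2 ∧ b ∈ F2 := by
      intro i a b h0 ha hb
      have h1 : a ∈ F2 := by
        have := mul_mem (mu i) (ms i)
        rwa [hb, div_mul_cancel₀ _ h0] at this
      refine ⟨h1, ?_⟩
      have h := sub_mem (ms i) h1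
      rwa [ha, add_sub_cancel_left] at h
    apply Bd_of_Xvar
    exact forall_fin8 (A 0 _ _ s0 rfl rfl).1 (A 1 _ _ s1 rfl rfl).1 (A 2 _ _ s2 rfl rfl).1
      (A 3 _ _ s3 rfl rfl).1 (A 0 _ _ s0 rfl rfl).2 (A 1 _ _ s1 rfl rfl).2
      (A 2 _ _ s2 rfl rfl).2 (A 3 _ _ s3 rfl rfl).2

end TwoCase

/-- **Rationality for `G₂₃ ≃ GL(2,3)`.** For any field `K`, the subgroup `G₂₃ ⊆ S₈` generated by `Θ = (1,2,3,4,5,6,7,8)` and `Φ = (1,2,4)(5,6,8)` (of order 48, isomorphic to `GL(2,3)`; indices written `0,…,7`) has `K`-rational fixed field `K(x₁,…,x₈)^{G₂₃}`. -/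
theorem rationality_G23 (K : Type) [Field K] :
    IsRatExt K ↥(fixedSub K (Fin 8) (Subgroup.closure
      {finRotate 8,
       (Equiv.swap (0 : Fin 8) 1 * Equiv.swap 1 3) * (Equiv.swap (4 : Fin 8) 5 * Equiv.swap 5 7)})) := by
  by_cases h : (2 : K) = 0
  · exact case_two K h
  · exact case_odd K h
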